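/- arXiv:1902.02456 — 8 statements merged into one kernel-verified Lean document; each statement's English description precedes it below -/
import Mathlib

section
/- Let φ : ℝ → ℝ be continuous with lim_{t→−∞} φ(t) = 0 and lim_{t→+∞} φ(t) = 1. Let μ be a finite signed Borel measure on J^m = [−1,1]^m ⊂ ℝ^m, let w ∈ ℝ^m \ {0}, and let s, t ∈ ℝ. Then lim_{λ→+∞} ∫_{J^m} φ(λ(w·x + s) + t) dμ(x) = μ({x ∈ J^m : w·x + s > 0}) + φ(t) · μ({x ∈ J^m : w·x + s = 0}). -/
open MeasureTheory Filter Topology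

theorem sig_bdd (φ : ℝ → ℝ) (hφ : Continuous φ)
    (h0 : Tendsto φ atBot (𝓝 0)) (h1 : Tendsto φ atTop (𝓝 1)) : ∃ C, ∀ x, ‖φ x‖ ≤ C := by
  have e0 : ∀ᶠ x in atBot, ‖φ x‖ < 2 := h0.norm.eventually_lt_const (by norm_num)
  have e1 : ∀ᶠ x in atTop, ‖φ x‖ < 2 := h1.norm.eventually_lt_const (by norm_num)
  obtain ⟨a, ha⟩ := eventually_atBot.1 e0
  obtain ⟨b, hb⟩ := eventually_atTop.1 e1
  obtain ⟨C, hC⟩ := (isCompact_Icc (a := a) (b := b)).exists_bound_of_continuousOn hφ.continuousOn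
  refine ⟨max C 2, fun x => ?_⟩
  rcases le_total x a with h | h
  · exact (ha x h).le.trans (le_max_right _ _)
  rcases le_total b x with h' | h'
  · exact (hb x h').le.trans (le_max_right _ _)
  · exact (hC x ⟨h, h'⟩).trans (le_max_left _ _)

theorem sig_lim {X : Type*} [MeasurableSpace X] (μ : Measure X) [IsFiniteMeasure μ]
    (φ : ℝ → ℝ) (hφ : Continuous φ)
    (h0 : Tendsto φ atBot (𝓝 0)) (h1 : Tendsto φ atTop (𝓝 1))
    (g : X → ℝ) (hg : Measurable g) (t : ℝ) :
    Tendsto (fun lam : ℝ => ∫ x, φ (lam * g x + t) ∂μ) atTop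
      (𝓝 ((μ {x | 0 < g x}).toReal + φ t * (μ {x | g x = 0}).toReal)) := by
  obtain ⟨C, hC⟩ := sig_bdd φ hφ h0 h1
  have mp : MeasurableSet {x | 0 < g x} := measurableSet_lt measurable_const hg
  have mz : MeasurableSet {x | g x = 0} := measurableSet_eq_fun hg measurable_const
  have key : ∫ x, ({x | 0 < g x}.indicator (fun _ => (1 : ℝ)) x +
      {x | g x = 0}.indicator (fun _ => φ t) x) ∂μ =
      (μ {x | 0 < g x}).toReal + φ t * (μ {x | g x = 0}).toReal := by
    rw [integral_add ((integrable_const _).indicator mp) ((integrable_const _).indicator mz),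
      integral_indicator_const _ mp, integral_indicator_const _ mz]
    simp [Measure.real, mul_comm]
  rw [← key]
  refine tendsto_integral_filter_of_dominated_convergence (fun _ => C) ?_ ?_
    (integrable_const _) ?_
  · exact Eventually.of_forall fun lam =>
      (hφ.measurable.comp ((hg.const_mul lam).add_const t)).aestronglyMeasurable
  · exact Eventually.of_forall fun lam => Eventually.of_forall fun x => hC _
  · refine Eventually.of_forall fun x => ?_
    rcases lt_trichotomy (g x) 0 with h | h | h
    · simp only [Set.indicator, Set.mem_setOf_eq, h.not_gt, h.ne, if_false, add_zero]
      exact h0.comp (tendsto_atBot_add_const_right _ _ (tendsto_id.atTop_mul_const_of_neg h))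
    · simp [Set.indicator, h]
    · simp only [Set.indicator, Set.mem_setOf_eq, h, h.ne', if_false, if_true, add_zero]
      exact h1.comp (tendsto_atTop_add_const_right _ _ (tendsto_id.atTop_mul_const h))

/-- For a continuous sigmoidal `φ` (limits `0` at `-∞` and `1` at `+∞`) and a
finite signed Borel measure `μ = μ₁ - μ₂` supported on `J^m = [-1,1]^m`,
`lim_{λ→+∞} ∫ φ(λ(w·x+s)+t) dμ = μ({w·x+s > 0}) + φ(t) μ({w·x+s = 0})`. -/
theorem stmt4 {m : ℕ} (hm : 1 ≤ m) (φ : ℝ → ℝ) (hφ : Continuous φ)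
    (h0 : Tendsto φ atBot (𝓝 0)) (h1 : Tendsto φ atTop (𝓝 1))
    (μ₁ μ₂ : Measure (Fin m → ℝ)) [IsFiniteMeasure μ₁] [IsFiniteMeasure μ₂]
    (hs₁ : μ₁ (Set.Icc (-1 : Fin m → ℝ) 1)ᶜ = 0) (hs₂ : μ₂ (Set.Icc (-1 : Fin m → ℝ) 1)ᶜ = 0)
    (w : Fin m → ℝ) (hw : w ≠ 0) (s t : ℝ) :
    Tendsto (fun lam : ℝ =>
        (∫ x, φ (lam * ((∑ i, w i * x i) + s) + t) ∂μ₁) -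
          ∫ x, φ (lam * ((∑ i, w i * x i) + s) + t) ∂μ₂)
      atTop
      (𝓝 (((μ₁ {x | 0 < (∑ i, w i * x i) + s}).toReal -
              (μ₂ {x | 0 < (∑ i, w i * x i) + s}).toReal) +
            φ t * ((μ₁ {x | (∑ i, w i * x i) + s = 0}).toReal -
              (μ₂ {x | (∑ i, w i * x i) + s = 0}).toReal))) := by
  have hg : Measurable (fun x : Fin m → ℝ => (∑ i, w i * x i) + s) := by fun_prop
  have a := (sig_lim μ₁ φ hφ h0 h1 _ hg t).sub (sig_lim μ₂ φ hφ h0 h1 _ hg t)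
  convert a using 2
  ring
end

section
/- (Cybenko's Universal Approximation Theorem.) Let φ : ℝ → ℝ be continuous with lim_{t→−∞} φ(t) = 0 and lim_{t→+∞} φ(t) = 1. Then the linear span of the family of functions {x ↦ φ(w·x + λ) : w ∈ ℝ^m \ {0}, λ ∈ ℝ} is dense in the space C(J^m, ℝ) of continuous real-valued functions on J^m = [−1,1]^m with respect to the uniform (sup) norm. -/
open MeasureTheory Filter Topology

lemma sigmoid_bdd (φ : ℝ → ℝ) (hφ : Continuous φ)
    (h0 : Tendsto φ atBot (𝓝 0)) (h1 : Tendsto φ atTop (𝓝 1)) :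
    ∃ M : ℝ, 0 ≤ M ∧ ∀ t, |φ t| ≤ M := by
  have e0 := (Metric.tendsto_nhds.1 h0) 1 one_pos
  have e1 := (Metric.tendsto_nhds.1 h1) 1 one_pos
  obtain ⟨a, ha⟩ := eventually_atBot.1 e0
  obtain ⟨b, hb⟩ := eventually_atTop.1 e1
  obtain ⟨C, hC⟩ := (isCompact_Icc (a := a) (b := b)).exists_bound_of_continuousOn hφ.continuousOn
  refine ⟨max 2 C, le_trans (by norm_num) (le_max_left _ _), fun t => ?_⟩
  rcases le_total t a with h | h
  · have := ha t h
    rw [Real.dist_eq, sub_zero] at this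
    exact le_trans (by linarith) (le_max_left _ _)
  rcases le_total b t with h' | h'
  · have := hb t h'
    rw [Real.dist_eq] at this
    refine le_trans ?_ (le_max_left _ _)
    rw [abs_lt] at this
    rw [abs_le]
    constructor <;> linarith
  · exact le_trans (hC t ⟨h, h'⟩) (le_max_right _ _)

lemma sigmoid_approx (φ : ℝ → ℝ) (hφ : Continuous φ)
    (h0 : Tendsto φ atBot (𝓝 0)) (h1 : Tendsto φ atTop (𝓝 1))
    (f : ℝ → ℝ) (hf : Continuous f) (R : ℝ) (hR : 0 < R) (ε : ℝ) (hε : 0 < ε) :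
    ∃ (N : ℕ) (k : ℝ) (c s : ℕ → ℝ) (c0 : ℝ), k ≠ 0 ∧ ∀ t, |t| ≤ R →
      |f t - (c0 + ∑ j ∈ Finset.range N, c j * φ (k * (t - s j)))| ≤ ε := by
  obtain ⟨M, hM0, hM⟩ := sigmoid_bdd φ hφ h0 h1
  set η : ℝ := ε / (2 * M + 4) with hη
  have hηpos : 0 < η := by positivity
  have huc := (isCompact_Icc (a := -R) (b := R)).uniformContinuousOn_of_continuous hf.continuousOn
  obtain ⟨δ, hδ, hfδ⟩ := (Metric.uniformContinuousOn_iff.1 huc) η hηpos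
  obtain ⟨N, hN⟩ := exists_nat_gt (2 * R / δ)
  have hNpos : (0 : ℝ) < N := lt_trans (by positivity) hN
  set h : ℝ := 2 * R / N with hh
  have hhpos : 0 < h := by positivity
  have hNh : N * h = 2 * R := by rw [hh]; field_simp
  have hhδ : h < δ := by
    rw [hh, div_lt_iff₀ hNpos]
    rw [div_lt_iff₀ hδ] at hN
    linarith
  have hinv : (0 : ℝ) < 1 / N := by positivity
  obtain ⟨a, ha⟩ := eventually_atBot.1 ((Metric.tendsto_nhds.1 h0) _ hinv)
  obtain ⟨b, hb⟩ := eventually_atTop.1 ((Metric.tendsto_nhds.1 h1) _ hinv)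
  set T : ℝ := max 1 (max b (-a)) with hT
  have hT1 : 1 ≤ T := le_max_left _ _
  have hTb : b ≤ T := le_trans (le_max_left _ _) (le_max_right _ _)
  have hTa : -a ≤ T := le_trans (le_max_right _ _) (le_max_right _ _)
  have hTpos : 0 < T := by linarith
  set k : ℝ := T / h with hk
  have hkpos : 0 < k := by positivity
  have hkh : k * h = T := by rw [hk]; field_simp
  set p : ℕ → ℝ := fun j => -R + j * h with hp
  have hpmem : ∀ j : ℕ, j ≤ N → p j ∈ Set.Icc (-R) R := by
    intro j hj
    have hj' : (j : ℝ) ≤ N := by exact_mod_cast hj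
    have h2 : (j : ℝ) * h ≤ N * h := by gcongr
    have h3 : 0 ≤ (j : ℝ) * h := by positivity
    constructor <;> simp only [hp] <;> linarith
  refine ⟨N, k, fun j => f (p (j + 1)) - f (p j), fun j => p (j + 1), f (p 0), hkpos.ne', ?_⟩
  intro t ht
  rw [abs_le] at ht
  set i : ℕ := ⌊(t + R) / h⌋₊ with hi
  have hq0 : 0 ≤ (t + R) / h := div_nonneg (by linarith) hhpos.le
  have hil : (i : ℝ) * h ≤ t + R := by
    have := Nat.floor_le hq0
    rwa [le_div_iff₀ hhpos] at this
  have hiu : t + R < (i + 1) * h := by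
    have := Nat.lt_floor_add_one ((t + R) / h)
    rwa [div_lt_iff₀ hhpos] at this
  have hiN : i ≤ N := by
    have : (i : ℝ) * h ≤ N * h := by linarith
    exact_mod_cast le_of_mul_le_mul_right this hhpos
  have hfi : |f t - f (p i)| ≤ η := by
    refine (hfδ t ⟨ht.1, ht.2⟩ (p i) (hpmem i hiN) ?_).le
    rw [Real.dist_eq, abs_lt]
    simp only [hp]
    constructor <;> nlinarith
  have hΔ : ∀ j ∈ Finset.range N, |f (p (j + 1)) - f (p j)| ≤ η := by
    intro j hj
    rw [Finset.mem_range] at hj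
    refine (hfδ _ (hpmem _ hj) _ (hpmem j hj.le) ?_).le
    rw [Real.dist_eq]
    have : p (j + 1) - p j = h := by simp only [hp]; push_cast; ring
    rw [this, abs_of_pos hhpos]
    exact hhδ
  have htel : f (p i) - f (p 0) =
      ∑ j ∈ Finset.range N, (f (p (j + 1)) - f (p j)) * (if j < i then 1 else 0) := by
    rw [← Finset.sum_range_sub (fun j => f (p j)) i]
    simp only [mul_ite, mul_one, mul_zero]
    rw [← Finset.sum_filter]
    congr 1
    ext j
    simp only [Finset.mem_filter, Finset.mem_range]
    omega
  have hterm : ∀ j ∈ Finset.range N,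
      |(if j < i then (1 : ℝ) else 0) - φ (k * (t - p (j + 1)))| ≤
        1 / N + ((if j = i then M + 1 else 0) + (if j = i - 1 then M + 1 else 0)) := by
    intro j _
    by_cases hex : j = i ∨ j = i - 1
    · have h2 : |(if j < i then (1 : ℝ) else 0) - φ (k * (t - p (j + 1)))| ≤ M + 1 := by
        have := abs_le.1 (hM (k * (t - p (j + 1))))
        rw [abs_le]
        split_ifs <;> constructor <;> linarith
      refine h2.trans ?_
      rcases hex with hex | hex
      · rw [if_pos hex]
        split_ifs <;> linarith
      · rw [if_pos hex]
        split_ifs <;> linarith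
    · push Not at hex
      rw [if_neg hex.1, if_neg hex.2, add_zero, add_zero]
      by_cases hji : j < i
      · rw [if_pos hji]
        have hj2 : j + 2 ≤ i := by omega
        have hj3 : (j : ℝ) + 2 ≤ i := by exact_mod_cast hj2
        have h4 : h ≤ t - p (j + 1) := by
          simp only [hp]; push_cast
          nlinarith
        have h5 : T ≤ k * (t - p (j + 1)) := by
          rw [← hkh]; gcongr
        have := hb _ (hTb.trans h5)
        rw [Real.dist_eq, abs_sub_comm] at this
        exact this.le
      · rw [if_neg hji]
        have hj2 : i + 1 ≤ j := by omega
        have hj3 : (i : ℝ) + 1 ≤ j := by exact_mod_cast hj2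
        have h4 : t - p (j + 1) ≤ -h := by
          simp only [hp]; push_cast
          nlinarith
        have h5 : k * (t - p (j + 1)) ≤ -T := by
          rw [← hkh, ← mul_neg]; gcongr
        have := ha _ (h5.trans (by linarith))
        rw [Real.dist_eq, abs_sub_comm] at this
        exact this.le
  have hsumle : ∑ j ∈ Finset.range N,
      |(if j < i then (1 : ℝ) else 0) - φ (k * (t - p (j + 1)))| ≤ 1 + 2 * (M + 1) := by
    refine (Finset.sum_le_sum hterm).trans ?_
    rw [Finset.sum_add_distrib, Finset.sum_add_distrib, Finset.sum_const, Finset.card_range,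
      Finset.sum_ite_eq', Finset.sum_ite_eq', nsmul_eq_mul, mul_one_div_cancel hNpos.ne']
    split_ifs <;> linarith
  have hdecomp : f t - (f (p 0) + ∑ j ∈ Finset.range N,
        (f (p (j + 1)) - f (p j)) * φ (k * (t - p (j + 1)))) =
      (f t - f (p i)) + ∑ j ∈ Finset.range N, (f (p (j + 1)) - f (p j)) *
        ((if j < i then (1 : ℝ) else 0) - φ (k * (t - p (j + 1)))) := by
    simp only [mul_sub (_ - _)]
    rw [Finset.sum_sub_distrib, ← htel]
    ring
  show |f t - (f (p 0) + ∑ j ∈ Finset.range N,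
        (f (p (j + 1)) - f (p j)) * φ (k * (t - p (j + 1))))| ≤ ε
  rw [hdecomp]
  have hs : |∑ j ∈ Finset.range N, (f (p (j + 1)) - f (p j)) *
        ((if j < i then (1 : ℝ) else 0) - φ (k * (t - p (j + 1))))| ≤ η * (1 + 2 * (M + 1)) := by
    refine (Finset.abs_sum_le_sum_abs _ _).trans ?_
    refine le_trans ?_ (mul_le_mul_of_nonneg_left hsumle hηpos.le)
    rw [Finset.mul_sum]
    refine Finset.sum_le_sum fun j hj => ?_
    rw [abs_mul]
    exact mul_le_mul_of_nonneg_right (hΔ j hj) (abs_nonneg _)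
  refine (abs_add_le _ _).trans ((add_le_add hfi hs).trans (le_of_eq ?_))
  rw [hη]
  field_simp
  ring

/-- Cybenko's Universal Approximation Theorem: for a continuous `φ` with
`φ(t) → 0` as `t → -∞` and `φ(t) → 1` as `t → +∞`, the span of the functions
`x ↦ φ(w·x + λ)`, `w ∈ ℝ^m \ {0}`, `λ ∈ ℝ`, is uniformly dense in `C(J^m, ℝ)`,
`J^m = [-1,1]^m`. -/
theorem stmt5 {m : ℕ} (hm : 1 ≤ m) (φ : ℝ → ℝ) (hφ : Continuous φ)
    (h0 : Tendsto φ atBot (𝓝 0)) (h1 : Tendsto φ atTop (𝓝 1)) :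
    Dense (Submodule.span ℝ
      {g : C(↥(Set.Icc (-1 : Fin m → ℝ) 1), ℝ) |
        ∃ w : Fin m → ℝ, w ≠ 0 ∧ ∃ lam : ℝ,
          ⇑g = fun x : ↥(Set.Icc (-1 : Fin m → ℝ) 1) =>
            φ ((∑ i, w i * (x : Fin m → ℝ) i) + lam)} :
      Set C(↥(Set.Icc (-1 : Fin m → ℝ) 1), ℝ)) := by
  set S := {g : C(↥(Set.Icc (-1 : Fin m → ℝ) 1), ℝ) |
        ∃ w : Fin m → ℝ, w ≠ 0 ∧ ∃ lam : ℝ,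
          ⇑g = fun x : ↥(Set.Icc (-1 : Fin m → ℝ) 1) =>
            φ ((∑ i, w i * (x : Fin m → ℝ) i) + lam)} with hS
  set V := (Submodule.span ℝ S).topologicalClosure with hV
  have hVc : IsClosed (V : Set C(↥(Set.Icc (-1 : Fin m → ℝ) 1), ℝ)) :=
    Submodule.isClosed_topologicalClosure _
  have hSV : ∀ g ∈ S, g ∈ V := fun g hg =>
    Submodule.le_topologicalClosure _ (Submodule.subset_span hg)
  let U : (Fin m → ℝ) → C(↥(Set.Icc (-1 : Fin m → ℝ) 1), ℝ) := fun w =>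
    ⟨fun x => ∑ i, w i * (x : Fin m → ℝ) i,
      continuous_finsetSum _ fun i _ =>
        continuous_const.mul ((continuous_apply i).comp continuous_subtype_val)⟩
  let Φ : C(ℝ, ℝ) := ⟨φ, hφ⟩
  have hgen : ∀ w : Fin m → ℝ, w ≠ 0 → ∀ k : ℝ, k ≠ 0 → ∀ l : ℝ,
      Φ.comp (k • U w + ContinuousMap.const _ l) ∈ V := by
    intro w hw k hk l
    refine hSV _ ⟨k • w, smul_ne_zero hk hw, l, ?_⟩
    funext x
    simp [Φ, U, Finset.mul_sum, mul_assoc]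
  have hconst : ∀ c : ℝ, ContinuousMap.const _ c ∈ V := by
    have : ∃ l, φ l ≠ 0 := by
      by_contra hcon
      push Not at hcon
      have h2 : φ = fun _ => 0 := funext hcon
      rw [h2] at h1
      exact zero_ne_one (tendsto_nhds_unique tendsto_const_nhds h1)
    obtain ⟨l, hl⟩ := this
    have hw : (fun _ => 1 : Fin m → ℝ) ≠ 0 := by
      intro h
      have := congrFun h ⟨0, hm⟩
      simp at this
    have hcont : Continuous (fun k : ℝ =>
        Φ.comp (k • U (fun _ => 1) + ContinuousMap.const _ l)) := by
      refine (ContinuousMap.continuous_postcomp Φ).comp ?_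
      fun_prop
    have hlim : Φ.comp ((0 : ℝ) • U (fun _ => 1) + ContinuousMap.const _ l) ∈ V := by
      refine hVc.mem_of_tendsto (b := 𝓝[≠] (0 : ℝ))
        ((hcont.tendsto 0).mono_left nhdsWithin_le_nhds) ?_
      filter_upwards [self_mem_nhdsWithin] with k hk
      exact hgen _ hw k hk l
    intro c
    have := V.smul_mem (c / φ l) hlim
    convert this using 1
    ext x
    simp [Φ, hl]
  have hcomp : ∀ (w : Fin m → ℝ) (f : C(ℝ, ℝ)), f.comp (U w) ∈ V := by
    intro w f
    by_cases hw : w = 0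
    · convert hconst (f 0) using 1
      ext x
      simp [U, hw]
    have : f.comp (U w) ∈ closure (V : Set C(↥(Set.Icc (-1 : Fin m → ℝ) 1), ℝ)) := by
      rw [Metric.mem_closure_iff]
      intro ε hε
      obtain ⟨N, k, c, s, c0, hk, hap⟩ := sigmoid_approx φ hφ h0 h1 f f.continuous
        (‖U w‖ + 1) (by positivity) (ε / 2) (by positivity)
      refine ⟨ContinuousMap.const _ c0 + ∑ j ∈ Finset.range N,
        c j • Φ.comp (k • U w + ContinuousMap.const _ (- (k * s j))), ?_, ?_⟩
      · exact V.add_mem (hconst _) (V.sum_mem fun j _ => V.smul_mem _ (hgen w hw k hk _))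
      · refine lt_of_le_of_lt ((ContinuousMap.dist_le (by positivity)).2 fun x => ?_)
          (half_lt_self hε)
        have hx : |U w x| ≤ ‖U w‖ + 1 := by
          have := (U w).norm_coe_le_norm x
          rw [Real.norm_eq_abs] at this
          linarith
        have := hap _ hx
        rw [Real.dist_eq]
        simp only [mul_sub] at this
        simpa [Φ, ← sub_eq_add_neg, ContinuousMap.sum_apply] using this
    rwa [hVc.closure_eq] at this
  let E : C(ℝ, ℝ) := ⟨Real.exp, Real.continuous_exp⟩
  let P : Submonoid C(↥(Set.Icc (-1 : Fin m → ℝ) 1), ℝ) :=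
    { carrier := Set.range fun w => E.comp (U w)
      one_mem' := ⟨0, by ext x; simp [E, U]⟩
      mul_mem' := by
        rintro _ _ ⟨a, rfl⟩ ⟨b, rfl⟩
        refine ⟨a + b, ?_⟩
        ext x
        simp [E, U, add_mul, Finset.sum_add_distrib, Real.exp_add] }
  let A := Algebra.adjoin ℝ (P : Set C(↥(Set.Icc (-1 : Fin m → ℝ) 1), ℝ))
  have hAV : ∀ g ∈ A, g ∈ V := by
    intro g hg
    have : g ∈ Subalgebra.toSubmodule A := hg
    rw [Algebra.adjoin_eq_span, Submonoid.closure_eq] at this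
    refine (Submodule.span_le (p := V)).2 ?_ this
    rintro _ ⟨w, rfl⟩
    exact hcomp w E
  have hsep : A.SeparatesPoints := by
    intro x y hxy
    have : ∃ i, (x : Fin m → ℝ) i ≠ (y : Fin m → ℝ) i := by
      by_contra hcon
      push Not at hcon
      exact hxy (Subtype.ext (funext hcon))
    obtain ⟨i, hi⟩ := this
    refine ⟨_, ⟨E.comp (U (Pi.single i 1)), Algebra.subset_adjoin ⟨_, rfl⟩, rfl⟩, ?_⟩
    simpa [E, U, Pi.single_apply] using hi
  have htop := ContinuousMap.subalgebra_topologicalClosure_eq_top_of_separatesPoints A hsep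
  intro g
  have hg : g ∈ A.topologicalClosure := by rw [htop]; trivial
  have hg2 : g ∈ closure (A : Set C(↥(Set.Icc (-1 : Fin m → ℝ) 1), ℝ)) := hg
  have hg3 : g ∈ V := closure_minimal hAV hVc hg2
  exact hg3
end

section
/- (Kolmogorov superposition theorem.) For every integer n ≥ 1 there exist continuous functions ψ_{q,p} : ℝ → ℝ for 0 ≤ q ≤ 2n and 1 ≤ p ≤ n (independent of the function to be represented) such that: for every continuous function f : [0,1]^n → ℝ there exist continuous functions Φ_q : ℝ → ℝ (0 ≤ q ≤ 2n) with f(x₁, …, x_n) = Σ_{q=0}^{2n} Φ_q( Σ_{p=1}^{n} ψ_{q,p}(x_p) ) for all (x₁, …, x_n) ∈ [0,1]^n. -/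
open unitInterval

/-- Generic perturbation: sums become injective. -/
lemma ks_generic (n M : ℕ) (w : Fin n → Fin M → ℝ) (ε : ℝ) (hε : 0 < ε) :
    ∃ v : Fin n → Fin M → ℝ, (∀ p j, |v p j - w p j| < ε) ∧
      Function.Injective (fun j : Fin n → Fin M => ∑ p, v p (j p)) := by
  classical
  let P := {a : (Fin n → Fin M) × (Fin n → Fin M) // a.1 ≠ a.2}
  let U : P → Set (Fin n → Fin M → ℝ) :=
    fun a => {v | ∑ p, v p (a.1.1 p) - ∑ p, v p (a.1.2 p) ≠ 0}
  have hc : ∀ a : P, Continuous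
      (fun v : Fin n → Fin M → ℝ => ∑ p, v p (a.1.1 p) - ∑ p, v p (a.1.2 p)) := by
    intro a; fun_prop
  have hopen : ∀ a, IsOpen (U a) := fun a => isOpen_ne_fun (hc a) continuous_const
  have hdense : ∀ a, Dense (U a) := by
    rintro ⟨⟨a, b⟩, hab⟩
    rw [Metric.dense_iff]
    intro v r hr
    by_cases h : ∑ p, v p (a p) - ∑ p, v p (b p) = 0
    · obtain ⟨p₀, hp₀⟩ := Function.ne_iff.mp hab
      let e : Fin n → Fin M → ℝ := Pi.single p₀ (Pi.single (a p₀) (r / 2))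
      have he : ∑ p, e p (a p) - ∑ p, e p (b p) = r / 2 := by
        rw [Finset.sum_eq_single p₀, Finset.sum_eq_single p₀]
        · simp [e, Ne.symm hp₀]
        · intro p _ hp; simp [e, hp]
        · simp
        · intro p _ hp; simp [e, hp]
        · simp
      refine ⟨v + e, ?_, ?_⟩
      · rw [Metric.mem_ball, dist_eq_norm, add_sub_cancel_left]
        refine lt_of_le_of_lt ?_ (half_lt_self hr)
        rw [pi_norm_le_iff_of_nonneg (by positivity)]
        intro p
        rw [pi_norm_le_iff_of_nonneg (by positivity)]
        intro j
        simp only [e, Pi.single_apply]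
        split_ifs
        · rw [Pi.single_apply]
          split_ifs
          · rw [Real.norm_eq_abs, abs_of_pos (by positivity)]
          · simp; positivity
        · simp; positivity
      · change ∑ p, (v p (a p) + e p (a p)) - ∑ p, (v p (b p) + e p (b p)) ≠ 0
        rw [Finset.sum_add_distrib, Finset.sum_add_distrib]
        have : r / 2 > 0 := by positivity
        intro h'
        linarith
    · exact ⟨v, Metric.mem_ball_self hr, h⟩
  have hd : Dense (⋂ a, U a) := dense_iInter_of_isOpen hopen hdense
  obtain ⟨v, hv, hvU⟩ := (Metric.dense_iff.mp hd) w ε hε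
  refine ⟨v, ?_, ?_⟩
  · intro p j
    rw [← Real.dist_eq]
    exact lt_of_le_of_lt ((dist_le_pi_dist (v p) (w p) j).trans (dist_le_pi_dist v w p)) hv
  · intro a b hab
    by_contra hne
    have := Set.mem_iInter.mp hvU ⟨(a, b), hne⟩
    exact this (sub_eq_zero.mpr hab)

/-- Shifted interval families. -/
lemma ks_intervals (K : ℕ) (hK : 1 ≤ K) (η : ℝ) (hη : 0 < η) :
    ∃ (M : ℕ) (A : Fin K → Fin M → Set I),
      (∀ q j, IsClosed (A q j)) ∧
      (∀ q j x y, x ∈ A q j → y ∈ A q j → dist x y < η) ∧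
      (∀ q j j' x, x ∈ A q j → x ∈ A q j' → j = j') ∧
      (∀ (x : I) q q', (∀ j, x ∉ A q j) → (∀ j, x ∉ A q' j) → q = q') := by
  obtain ⟨N, hN⟩ := exists_nat_gt (1 / η)
  have hN0 : (0:ℝ) < N := lt_trans (by positivity) hN
  have hK0 : (0:ℝ) < K := by exact_mod_cast hK
  refine ⟨N + 2, fun q j => {x | (K:ℝ) * (j:ℕ) ≤ N * K * (x:ℝ) + (q:ℕ) ∧
    N * K * (x:ℝ) + (q:ℕ) ≤ K * (j:ℕ) + K - 1}, ?_, ?_, ?_, ?_⟩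
  · intro q j
    simp only [Set.ofPred_and]
    apply IsClosed.inter
    · exact isClosed_le (by fun_prop) (by fun_prop)
    · exact isClosed_le (by fun_prop) (by fun_prop)
  · rintro q j x y ⟨h1, h2⟩ ⟨h3, h4⟩
    have hNη : 1 < N * η := by rwa [div_lt_iff₀ hη] at hN
    rw [Subtype.dist_eq, Real.dist_eq]
    have key : N * K * |(x:ℝ) - y| < N * K * η := by
      rw [← abs_of_pos (mul_pos hN0 hK0), ← abs_mul, abs_of_pos (mul_pos hN0 hK0), abs_lt]
      constructor <;> nlinarith
    exact lt_of_mul_lt_mul_left key (by positivity)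
  · rintro q j j' x ⟨h1, h2⟩ ⟨h3, h4⟩
    have aux : ∀ a b : ℕ, (K:ℝ) * a ≤ N * K * (x:ℝ) + (q:ℕ) →
        N * K * (x:ℝ) + (q:ℕ) ≤ K * b + K - 1 → a ≤ b := by
      intro a b ha hb
      by_contra! h
      have : (b:ℝ) + 1 ≤ a := by exact_mod_cast h
      nlinarith
    exact Fin.ext (le_antisymm (aux _ _ h1 h4) (aux _ _ h3 h2))
  · intro x q q' hq hq'
    have aux : ∀ q : Fin K, (∀ j : Fin (N+2), x ∉ {x : I | (K:ℝ) * (j:ℕ) ≤ N * K * (x:ℝ) + (q:ℕ) ∧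
        N * K * (x:ℝ) + (q:ℕ) ≤ K * (j:ℕ) + K - 1}) →
        ∃ j : ℕ, (K:ℝ) * j + K - 1 < N * K * (x:ℝ) + (q:ℕ) ∧
          N * K * (x:ℝ) + (q:ℕ) < K * j + K := by
      intro q hq
      have hx0 := x.2.1
      have hx1 := x.2.2
      have hqK : ((q:ℕ):ℝ) < K := by exact_mod_cast q.2
      have hy0 : 0 ≤ (N * K * (x:ℝ) + (q:ℕ)) / K := by positivity
      have h1 := Nat.floor_le hy0
      have h2 := Nat.lt_floor_add_one ((N * K * (x:ℝ) + (q:ℕ)) / K)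
      set j := ⌊(N * K * (x:ℝ) + (q:ℕ)) / K⌋₊
      rw [le_div_iff₀ hK0] at h1
      rw [div_lt_iff₀ hK0] at h2
      have hj : j < N + 2 := by
        have : (j:ℝ) < N + 2 := by
          have : (j:ℝ) * K < (N + 2) * K := by
            have : N * K * (x:ℝ) ≤ N * K := mul_le_of_le_one_right (by positivity) hx1
            nlinarith
          exact lt_of_mul_lt_mul_right this hK0.le
        exact_mod_cast this
      refine ⟨j, ?_, by linarith⟩
      by_contra! h
      exact hq ⟨j, hj⟩ ⟨by simp only; linarith, by simpa using h⟩
    obtain ⟨j, h1, h2⟩ := aux q hq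
    obtain ⟨j', h3, h4⟩ := aux q' hq'
    have e1 : (K:ℝ) * j + (q':ℕ) < K * j' + (q:ℕ) + 1 := by linarith
    have e2 : (K:ℝ) * j' + (q:ℕ) < K * j + (q':ℕ) + 1 := by linarith
    have e1' : K * j + (q':ℕ) < K * j' + (q:ℕ) + 1 := by exact_mod_cast e1
    have e2' : K * j' + (q:ℕ) < K * j + (q':ℕ) + 1 := by exact_mod_cast e2
    have e : K * j + (q':ℕ) = K * j' + (q:ℕ) := by omega
    have := congrArg (· % K) e
    simp only [Nat.mul_add_mod, Nat.mod_eq_of_lt q.2, Nat.mod_eq_of_lt q'.2] at this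
    exact Fin.ext this.symm

/-- Iteration. -/
lemma ks_iter {E F : Type*} [NormedAddCommGroup E] [NormedSpace ℝ E] [CompleteSpace E]
    [NormedAddCommGroup F] [NormedSpace ℝ F] (T : E →L[ℝ] F) (C l : ℝ) (hl0 : 0 ≤ l) (hl : l < 1)
    (hC : 0 ≤ C)
    (h : ∀ y, ∃ x, ‖x‖ ≤ C * ‖y‖ ∧ ‖y - T x‖ ≤ l * ‖y‖) : Function.Surjective T := by
  intro y
  choose g hg1 hg2 using h
  let u : ℕ → F := fun k => Nat.rec y (fun _ z => z - T (g z)) k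
  have hu : ∀ k, u (k+1) = u k - T (g (u k)) := fun k => rfl
  have hub : ∀ k, ‖u k‖ ≤ l ^ k * ‖y‖ := by
    intro k
    induction k with
    | zero => simp [u]
    | succ k ih =>
      rw [hu]
      refine (hg2 _).trans ?_
      rw [pow_succ' l k, mul_assoc]
      exact mul_le_mul_of_nonneg_left ih hl0
  have hgeo := summable_geometric_of_lt_one hl0 hl
  have hs : Summable (fun k => g (u k)) := by
    refine Summable.of_norm_bounded (g := fun k => C * (l ^ k * ‖y‖))
      ((hgeo.mul_right _).mul_left _) ?_
    intro k
    exact (hg1 _).trans (mul_le_mul_of_nonneg_left (hub k) hC)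
  refine ⟨∑' k, g (u k), ?_⟩
  have h1 := (T.hasSum hs.hasSum).tendsto_sum_nat
  have h2 : ∀ m, ∑ k ∈ Finset.range m, T (g (u k)) = y - u m := by
    intro m
    induction m with
    | zero => simp [u]
    | succ m ih => rw [Finset.sum_range_succ, ih, hu]; abel
  have h3 : Filter.Tendsto u Filter.atTop (nhds 0) := by
    refine squeeze_zero_norm hub ?_
    simpa using (tendsto_pow_atTop_nhds_zero_of_lt_one hl0 hl).mul_const ‖y‖
  have h4 : Filter.Tendsto (fun m => y - u m) Filter.atTop (nhds (y - 0)) := h3.const_sub y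
  rw [sub_zero] at h4
  refine tendsto_nhds_unique h1 ?_
  convert h4 using 2 with m
  exact h2 m

/-- Tietze: approximate `ψ` by a function constant on each `A j`. -/
lemma ks_ext (M : ℕ) (A : Fin M → Set I) (hA : ∀ j, IsClosed (A j))
    (hdisj : ∀ j j' x, x ∈ A j → x ∈ A j' → j = j') (ψ : C(I, ℝ)) (v : Fin M → ℝ) (δ : ℝ)
    (hδ : 0 ≤ δ) (hv : ∀ j, ∀ x ∈ A j, |v j - ψ x| ≤ δ) :
    ∃ φ : C(I, ℝ), ‖φ - ψ‖ ≤ δ ∧ ∀ j, ∀ x ∈ A j, φ x = v j := by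
  classical
  let S : Set I := ⋃ j, A j
  have hS : IsClosed S := isClosed_iUnion_of_finite hA
  let g : I → ℝ := fun x => if h : ∃ j, x ∈ A j then v h.choose - ψ x else 0
  have hg : ∀ j, ∀ x ∈ A j, g x = v j - ψ x := by
    intro j x hx
    have h : ∃ j, x ∈ A j := ⟨j, hx⟩
    simp only [g, dif_pos h]
    rw [hdisj _ _ _ h.choose_spec hx]
  have hgc : ContinuousOn g S := by
    refine (locallyFinite_of_finite _).continuousOn_iUnion hA ?_
    intro j
    have : ContinuousOn (fun x => v j - ψ x) (A j) := by fun_prop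
    exact this.congr (hg j)
  have hgb : ∀ x : S, ‖g x‖ ≤ δ := by
    rintro ⟨x, hx⟩
    obtain ⟨j, hj⟩ := Set.mem_iUnion.mp hx
    rw [Real.norm_eq_abs, hg j x hj]
    exact hv j x hj
  let G : BoundedContinuousFunction S ℝ :=
    BoundedContinuousFunction.ofNormedAddCommGroup (fun x : S => g x) hgc.domRestrict δ hgb
  have hG : ‖G‖ ≤ δ := (BoundedContinuousFunction.norm_le hδ).mpr hgb
  obtain ⟨H, hH, hHr⟩ := BoundedContinuousFunction.exists_extension_norm_eq_of_isClosedEmbedding G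
    hS.isClosedEmbedding_subtypeVal
  refine ⟨ψ + H.toContinuousMap, ?_, ?_⟩
  · rw [add_sub_cancel_left, ContinuousMap.norm_le _ hδ]
    intro x
    exact (H.norm_coe_le_norm x).trans (hH.trans_le hG)
  · intro j x hx
    have := congrFun hHr ⟨x, Set.mem_iUnion.mpr ⟨j, hx⟩⟩
    have h2 : H x = g x := this
    have h3 : (ψ + H.toContinuousMap) x = ψ x + H x := rfl
    rw [h3, h2, hg j x hx]
    ring

/-- The inner sums. -/
noncomputable def ksS {n K : ℕ} (ψ : Fin K → Fin n → C(I, ℝ)) (q : Fin K) : C(Fin n → I, ℝ) :=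
  ∑ p, (ψ q p).comp ⟨fun x => x p, continuous_apply p⟩

/-- The superposition. -/
noncomputable def ksT {n K : ℕ} (ψ : Fin K → Fin n → C(I, ℝ))
    (Φ : Fin K → BoundedContinuousFunction ℝ ℝ) : C(Fin n → I, ℝ) :=
  ∑ q, (Φ q).toContinuousMap.comp (ksS ψ q)

lemma ksS_apply {n K : ℕ} (ψ : Fin K → Fin n → C(I, ℝ)) (q : Fin K) (x : Fin n → I) :
    ksS ψ q x = ∑ p, ψ q p (x p) := by
  simp [ksS, ContinuousMap.sum_apply]

lemma ksT_apply {n K : ℕ} (ψ : Fin K → Fin n → C(I, ℝ))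
    (Φ : Fin K → BoundedContinuousFunction ℝ ℝ) (x : Fin n → I) :
    ksT ψ Φ x = ∑ q, Φ q (∑ p, ψ q p (x p)) := by
  simp [ksT, ContinuousMap.sum_apply, ksS_apply]

lemma ksT_continuous {n K : ℕ} (Φ : Fin K → BoundedContinuousFunction ℝ ℝ) :
    Continuous (fun ψ : Fin K → Fin n → C(I, ℝ) => ksT ψ Φ) := by
  unfold ksT ksS
  refine continuous_finsetSum _ fun q _ => ?_
  refine (ContinuousMap.continuous_postcomp _).comp ?_
  refine continuous_finsetSum _ fun p _ => ?_
  refine (ContinuousMap.continuous_precomp _).comp ?_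
  fun_prop

/-- Good set. -/
def ksU {n : ℕ} (l : ℝ) (f : C(Fin n → I, ℝ)) : Set (Fin (2 * n + 1) → Fin n → C(I, ℝ)) :=
  {ψ | ∃ Φ : Fin (2 * n + 1) → BoundedContinuousFunction ℝ ℝ,
    (∀ q, ‖Φ q‖ ≤ ‖f‖) ∧ ‖f - ksT ψ Φ‖ < l * ‖f‖}

lemma ksU_isOpen {n : ℕ} (l : ℝ) (f : C(Fin n → I, ℝ)) : IsOpen (ksU l f) := by
  have : ksU l f = ⋃ Φ ∈ {Φ : Fin (2 * n + 1) → BoundedContinuousFunction ℝ ℝ |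
      ∀ q, ‖Φ q‖ ≤ ‖f‖}, {ψ | ‖f - ksT ψ Φ‖ < l * ‖f‖} := by
    ext ψ
    simp [ksU]
  rw [this]
  refine isOpen_biUnion fun Φ _ => ?_
  exact isOpen_lt ((continuous_const.sub (ksT_continuous Φ)).norm) continuous_const

lemma ksU_dense {n : ℕ} (f : C(Fin n → I, ℝ)) (hf : f ≠ 0) :
    Dense (ksU ((2 * n + 1 : ℝ) / (2 * n + 2)) f) := by
  classical
  rw [Metric.dense_iff]
  intro ψ ε hε
  have hF : 0 < ‖f‖ := norm_pos_iff.mpr hf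
  have hn1 : (0:ℝ) < n + 1 := by positivity
  set ω : ℝ := ‖f‖ / (2 * (2 * n + 2)) with hω
  have hω0 : 0 < ω := by positivity
  -- uniform continuity
  have hfu : ∃ η > 0, ∀ x y, dist x y < η → dist (f x) (f y) < ω :=
    Metric.uniformContinuous_iff.mp
      (CompactSpace.uniformContinuous_of_continuous f.continuous) ω hω0
  obtain ⟨η₁, hη₁, hfη⟩ := hfu
  let Ψ : I → (Fin (2 * n + 1) → Fin n → ℝ) := fun x q p => ψ q p x
  have hΨ : Continuous Ψ := by fun_prop
  obtain ⟨η₂, hη₂, hψη⟩ := Metric.uniformContinuous_iff.mp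
      (CompactSpace.uniformContinuous_of_continuous hΨ) (ε / 4) (by positivity)
  obtain ⟨M, A, hAc, hAd, hAdisj, hAgap⟩ := ks_intervals (2 * n + 1) (by omega)
    (min η₁ η₂) (lt_min hη₁ hη₂)
  let c : Fin (2 * n + 1) → Fin M → I := fun q j => if h : (A q j).Nonempty then h.choose else 0
  have hc : ∀ q j, ∀ x ∈ A q j, dist x (c q j) < min η₁ η₂ := by
    intro q j x hx
    have h : (A q j).Nonempty := ⟨x, hx⟩
    simp only [c, dif_pos h]
    exact hAd q j _ _ hx h.choose_spec
  have hv := fun q => ks_generic n M (fun p j => ψ q p (c q j)) (ε / 4) (by positivity)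
  choose v hv1 hv2 using hv
  have hvψ : ∀ q p j, ∀ x ∈ A q j, |v q p j - ψ q p x| ≤ ε / 2 := by
    intro q p j x hx
    have h1 := hv1 q p j
    have h2 := hψη ((hc q j x hx).trans_le (min_le_right _ _))
    have h3 : |ψ q p x - ψ q p (c q j)| < ε / 4 := by
      rw [← Real.dist_eq]
      exact lt_of_le_of_lt ((dist_le_pi_dist (Ψ x q) (Ψ (c q j) q) p).trans
        (dist_le_pi_dist (Ψ x) (Ψ (c q j)) q)) h2
    rw [abs_lt] at h1 h3
    rw [abs_le]
    constructor <;> linarith [h1.1, h1.2, h3.1, h3.2]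
  choose φ hφ1 hφ2 using fun q p => ks_ext M (A q) (hAc q) (hAdisj q) (ψ q p) (v q p) (ε / 2)
    (by positivity) (hvψ q p)
  -- outer functions
  have hout : ∀ q, ∃ Φ : BoundedContinuousFunction ℝ ℝ, ‖Φ‖ ≤ ‖f‖ / (n + 1) ∧
      ∀ j : Fin n → Fin M, Φ (∑ p, v q p (j p)) = f (fun p => c q (j p)) / (n + 1) := by
    intro q
    let G : BoundedContinuousFunction (Fin n → Fin M) ℝ :=
      BoundedContinuousFunction.mkOfCompact
        ⟨fun j => f (fun p => c q (j p)) / (n + 1), continuous_of_discreteTopology⟩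
    have hG : ‖G‖ ≤ ‖f‖ / (n + 1) := by
      rw [BoundedContinuousFunction.norm_le (by positivity)]
      intro j
      change ‖f (fun p => c q (j p)) / (n + 1)‖ ≤ _
      rw [norm_div, Real.norm_of_nonneg hn1.le]
      gcongr
      exact f.norm_coe_le_norm _
    have hemb : Topology.IsClosedEmbedding (fun j : Fin n → Fin M => ∑ p, v q p (j p)) :=
      Topology.IsClosedEmbedding.of_continuous_injective_isClosedMap
        continuous_of_discreteTopology (hv2 q) (fun s _ => (s.toFinite.image _).isClosed)
    obtain ⟨H, hH, hHe⟩ :=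
      BoundedContinuousFunction.exists_extension_norm_eq_of_isClosedEmbedding G hemb
    exact ⟨H, hH.trans_le hG, fun j => congrFun hHe j⟩
  choose Φ hΦ1 hΦ2 using hout
  refine ⟨φ, ?_, Φ, ?_, ?_⟩
  · rw [Metric.mem_ball]
    refine lt_of_le_of_lt ?_ (half_lt_self hε)
    rw [dist_pi_le_iff (by positivity)]
    intro q
    rw [dist_pi_le_iff (by positivity)]
    intro p
    rw [dist_eq_norm]
    exact hφ1 q p
  · intro q
    refine (hΦ1 q).trans (div_le_self hF.le ?_)
    linarith [Nat.cast_nonneg (α := ℝ) n]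
  · rw [ContinuousMap.norm_lt_iff _ (by positivity)]
    intro x
    rw [ContinuousMap.sub_apply, ksT_apply, Real.norm_eq_abs]
    let bad : Finset (Fin (2 * n + 1)) :=
      Finset.univ.biUnion fun p : Fin n => Finset.univ.filter fun q => ∀ j, x p ∉ A q j
    have hbad : bad.card ≤ n := by
      refine (Finset.card_biUnion_le_card_mul _ _ 1 ?_).trans (by simp)
      intro p _
      rw [Finset.card_le_one]
      intro a ha b hb
      exact hAgap (x p) a b (Finset.mem_filter.mp ha).2 (Finset.mem_filter.mp hb).2
    have hgood : n + 1 ≤ badᶜ.card := by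
      rw [Finset.card_compl, Fintype.card_fin]; omega
    obtain ⟨T, hTs, hTc⟩ := Finset.exists_subset_card_eq hgood
    have hTcc : Tᶜ.card = n := by
      rw [Finset.card_compl, Fintype.card_fin]; omega
    have hT : ∀ q ∈ T, |f x / (n + 1) - Φ q (∑ p, φ q p (x p))| ≤ ω / (n + 1) := by
      intro q hq
      have h1 : ∀ p, ∃ j, x p ∈ A q j := by
        intro p
        by_contra! h
        have := Finset.mem_compl.mp (hTs hq)
        exact this (Finset.mem_biUnion.mpr ⟨p, Finset.mem_univ _,
          Finset.mem_filter.mpr ⟨Finset.mem_univ _, h⟩⟩)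
      choose j hj using h1
      have h2 : ∑ p, φ q p (x p) = ∑ p, v q p (j p) :=
        Finset.sum_congr rfl fun p _ => hφ2 q p (j p) (x p) (hj p)
      rw [h2, hΦ2, ← sub_div, abs_div, abs_of_pos hn1]
      gcongr
      rw [← Real.dist_eq]
      refine (hfη _ _ ?_).le
      rw [dist_pi_lt_iff hη₁]
      intro p
      exact (hc q (j p) (x p) (hj p)).trans_le (min_le_left _ _)
    have hsplit : f x - ∑ q, Φ q (∑ p, φ q p (x p)) =
        ∑ q ∈ T, (f x / (n + 1) - Φ q (∑ p, φ q p (x p)))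
          - ∑ q ∈ Tᶜ, Φ q (∑ p, φ q p (x p)) := by
      rw [Finset.sum_sub_distrib, Finset.sum_const, hTc, ← Finset.sum_add_sum_compl T, nsmul_eq_mul]
      push_cast
      field_simp
      ring
    rw [hsplit]
    have b1 : |∑ q ∈ T, (f x / (n + 1) - Φ q (∑ p, φ q p (x p)))| ≤ ω := by
      refine (Finset.abs_sum_le_sum_abs _ _).trans ((Finset.sum_le_sum hT).trans ?_)
      rw [Finset.sum_const, hTc, nsmul_eq_mul]
      push_cast
      rw [mul_div_cancel₀ _ hn1.ne']
    have b2 : |∑ q ∈ Tᶜ, Φ q (∑ p, φ q p (x p))| ≤ n * (‖f‖ / (n + 1)) := by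
      refine (Finset.abs_sum_le_sum_abs _ _).trans
        ((Finset.sum_le_sum fun q _ => ((Φ q).norm_coe_le_norm _).trans (hΦ1 q)).trans ?_)
      rw [Finset.sum_const, hTcc, nsmul_eq_mul]
    refine (abs_sub _ _).trans_lt ((add_le_add b1 b2).trans_lt ?_)
    have : (2 * n + 1 : ℝ) / (2 * n + 2) * ‖f‖ - (ω + n * (‖f‖ / (n + 1)))
        = ω := by
      rw [hω]
      field_simp
      ring
    linarith

lemma ks_exists (n : ℕ) : ∃ ψ : Fin (2 * n + 1) → Fin n → C(I, ℝ),
    ∀ f : C(Fin n → I, ℝ), ∃ Φ, ksT ψ Φ = f := by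
  set l : ℝ := (2 * n + 1 : ℝ) / (2 * n + 2) with hl
  have hl0 : 0 ≤ l := by positivity
  have hl1 : l < 1 := by rw [hl, div_lt_one (by positivity)]; linarith
  obtain ⟨D, hDc, hDd⟩ := TopologicalSpace.exists_countable_dense C(Fin n → I, ℝ)
  let D' := {f : C(Fin n → I, ℝ) // f ∈ D ∧ f ≠ 0}
  have : Countable D' := (hDc.mono (fun f (hf : f ∈ D ∧ f ≠ 0) => hf.1)).to_subtype
  have hcs : CompleteSpace (Fin (2 * n + 1) → Fin n → C(I, ℝ)) := inferInstance
  have hms : TopologicalSpace.IsCompletelyPseudoMetrizableSpace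
      (Fin (2 * n + 1) → Fin n → C(I, ℝ)) := ⟨⟨inferInstance, rfl, hcs⟩⟩
  have hbs : BaireSpace (Fin (2 * n + 1) → Fin n → C(I, ℝ)) :=
    BaireSpace.of_completelyPseudoMetrizable
  have hd : Dense (⋂ f : D', ksU l f.1) :=
    dense_iInter_of_isOpen (fun f => ksU_isOpen l f.1) (fun f => ksU_dense f.1 f.2.2)
  obtain ⟨ψ, hψ⟩ := hd.nonempty
  refine ⟨ψ, ?_⟩
  let TL : (Fin (2 * n + 1) → BoundedContinuousFunction ℝ ℝ) →ₗ[ℝ] C(Fin n → I, ℝ) :=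
    { toFun := ksT ψ
      map_add' := by
        intro a b; ext x; simp [ksT_apply, Finset.sum_add_distrib]
      map_smul' := by
        intro a b; ext x; simp [ksT_apply, Finset.mul_sum] }
  let T := TL.mkContinuous (2 * n + 1) (by
    intro Φ
    rw [ContinuousMap.norm_le _ (by positivity)]
    intro x
    change ‖ksT ψ Φ x‖ ≤ _
    rw [ksT_apply]
    refine (norm_sum_le _ _).trans ((Finset.sum_le_sum (g := fun _ => ‖Φ‖) fun q _ =>
      ((Φ q).norm_coe_le_norm _).trans (norm_le_pi_norm Φ q)).trans ?_)
    simp)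
  have hsurj : Function.Surjective T := by
    refine ks_iter T 2 ((1 + l) / 2) (by positivity) (by linarith) (by norm_num) ?_
    intro f
    by_cases hf : f = 0
    · exact ⟨0, by simp [hf]⟩
    have hF : 0 < ‖f‖ := norm_pos_iff.mpr hf
    set μ := (1 - l) / 4 with hμ
    have hμ0 : 0 < μ := by rw [hμ]; linarith
    obtain ⟨g, hgD, hg⟩ := hDd.exists_dist_lt f (mul_pos hμ0 hF)
    rw [dist_eq_norm] at hg
    have hgf : ‖g‖ ≤ (1 + μ) * ‖f‖ := by
      have : ‖g‖ ≤ ‖f‖ + ‖f - g‖ := by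
        calc ‖g‖ = ‖f - (f - g)‖ := by congr 1; abel
          _ ≤ _ := norm_sub_le _ _
      linarith
    have hg0 : g ≠ 0 := by
      rintro rfl
      rw [sub_zero] at hg
      nlinarith
    obtain ⟨Φ, h1, h2⟩ := Set.mem_iInter.mp hψ ⟨g, hgD, hg0⟩
    simp only at h1 h2
    refine ⟨Φ, ?_, ?_⟩
    · rw [pi_norm_le_iff_of_nonneg (by positivity)]
      intro q
      refine (h1 q).trans (hgf.trans ?_)
      gcongr
      linarith
    · change ‖f - ksT ψ Φ‖ ≤ _
      have h3 : ‖f - ksT ψ Φ‖ ≤ ‖f - g‖ + ‖g - ksT ψ Φ‖ := by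
        calc ‖f - ksT ψ Φ‖ = ‖(f - g) + (g - ksT ψ Φ)‖ := by congr 1; abel
          _ ≤ _ := norm_add_le _ _
      have h4 : l * ‖g‖ ≤ l * ((1 + μ) * ‖f‖) := mul_le_mul_of_nonneg_left hgf hl0
      have h5 : l * μ * ‖f‖ ≤ μ * ‖f‖ := by
        have : l * μ ≤ μ := mul_le_of_le_one_left hμ0.le hl1.le
        exact mul_le_mul_of_nonneg_right this hF.le
      have h6 : (1 + l) / 2 * ‖f‖ = l * ‖f‖ + 2 * (μ * ‖f‖) := by rw [hμ]; ring
      nlinarith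
  intro f
  obtain ⟨Φ, hΦ⟩ := hsurj f
  exact ⟨Φ, hΦ⟩

/-- Kolmogorov superposition theorem: for every `n ≥ 1` there exist
continuous inner functions `ψ q p : ℝ → ℝ` (`0 ≤ q ≤ 2n`, `1 ≤ p ≤ n`), independent of
`f`, such that every continuous `f : [0,1]^n → ℝ` can be written as
`f(x) = ∑_{q=0}^{2n} Φ_q (∑_{p=1}^n ψ_{q,p}(x_p))` on `[0,1]^n` for suitable continuous
outer functions `Φ_q : ℝ → ℝ`. -/
theorem stmt6 (n : ℕ) (hn : 1 ≤ n) :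
    ∃ ψ : Fin (2 * n + 1) → Fin n → ℝ → ℝ,
      (∀ q p, Continuous (ψ q p)) ∧
        ∀ f : (Fin n → ℝ) → ℝ, ContinuousOn f (Set.Icc (0 : Fin n → ℝ) 1) →
          ∃ Φ : Fin (2 * n + 1) → ℝ → ℝ,
            (∀ q, Continuous (Φ q)) ∧
              ∀ x ∈ Set.Icc (0 : Fin n → ℝ) 1,
                f x = ∑ q, Φ q (∑ p, ψ q p (x p)) := by
  obtain ⟨ψ, hψ⟩ := ks_exists n
  refine ⟨fun q p => Set.IccExtend zero_le_one (ψ q p), fun q p => (ψ q p).continuous.Icc_extend', ?_⟩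
  intro f hf
  let g : C(Fin n → I, ℝ) := ⟨fun x => f (fun p => (x p : ℝ)), by
    refine hf.comp_continuous (by fun_prop) ?_
    intro x
    exact ⟨fun p => (x p).2.1, fun p => (x p).2.2⟩⟩
  obtain ⟨Φ, hΦ⟩ := hψ g
  refine ⟨fun q => Φ q, fun q => (Φ q).continuous, ?_⟩
  intro x hx
  let y : Fin n → I := fun p => ⟨x p, hx.1 p, hx.2 p⟩
  have h1 : g y = f x := rfl
  rw [← h1, ← hΦ, ksT_apply]
  refine Finset.sum_congr rfl fun q _ => ?_
  congr 1
  refine Finset.sum_congr rfl fun p _ => ?_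
  change _ = Set.IccExtend zero_le_one (ψ q p) (x p)
  rw [Set.IccExtend_of_mem _ _ (⟨hx.1 p, hx.2 p⟩ : x p ∈ Set.Icc (0:ℝ) 1)]
end

section
/- Let Ω := Π_{j∈ℕ} (ℝ ∪ {∞}) be the countable product of the one-point compactification of ℝ, with the product topology (so Ω is compact), and let ℱ be its Borel σ-algebra. Let 𝒲 be a family of continuous functions X : Ω → ℝ which is separating, in the sense that the only finite signed Borel measure μ on Ω satisfying μ({ω : X(ω) > s}) = 0 and μ({ω : X(ω) = s}) = 0 for all X ∈ 𝒲 and all s ∈ ℝ is μ = 0. Let φ : ℝ → ℝ be continuous with lim_{t→−∞} φ(t) = 0 and lim_{t→+∞} φ(t) = 1. Then the linear span of the family {ω ↦ φ(X(ω) + λ) : X ∈ 𝒲, λ ∈ ℝ} is dense in C(Ω, ℝ) with respect to the uniform norm. -/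
open MeasureTheory Filter Topology

open scoped NNReal

section Moments

/-- The antiderivative vanishing at zero. -/
noncomputable def cybAnti : C(ℝ, ℝ) →ₗ[ℝ] C(ℝ, ℝ) where
  toFun f := ⟨fun x => ∫ t in (0:ℝ)..x, f t,
    intervalIntegral.continuous_primitive (fun a b => f.continuous.intervalIntegrable a b) 0⟩
  map_add' f g := by
    ext x
    simp only [ContinuousMap.coe_mk, ContinuousMap.add_apply]
    exact intervalIntegral.integral_add (f.continuous.intervalIntegrable _ _)
      (g.continuous.intervalIntegrable _ _)
  map_smul' c f := by
    ext x
    simp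

lemma cybAnti_apply (f : C(ℝ, ℝ)) (x : ℝ) : cybAnti f x = ∫ t in (0:ℝ)..x, f t := rfl

/-- Continuity of a functional with respect to uniform convergence on `[-M, M]`. -/
def CybBdd (M : ℝ) (L : C(ℝ, ℝ) →ₗ[ℝ] ℝ) : Prop :=
  ∃ C : ℝ, 0 ≤ C ∧ ∀ (f : C(ℝ, ℝ)) (ε : ℝ), 0 ≤ ε → (∀ x, |x| ≤ M → |f x| ≤ ε) → |L f| ≤ C * ε

/-- Translate. -/
def cybShift (f : C(ℝ, ℝ)) (l : ℝ) : C(ℝ, ℝ) := ⟨fun x => f (x + l), by fun_prop⟩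

lemma cybBdd_anti {M : ℝ} (hM : 0 ≤ M) {L : C(ℝ, ℝ) →ₗ[ℝ] ℝ} (hL : CybBdd M L) :
    CybBdd M (L ∘ₗ cybAnti) := by
  obtain ⟨C, hC, h⟩ := hL
  refine ⟨C * M, by positivity, fun f ε hε hf => ?_⟩
  rw [mul_assoc]
  refine h _ _ (by positivity) fun x hx => ?_
  rw [cybAnti_apply]
  have := intervalIntegral.norm_integral_le_of_norm_le_const (a := 0) (b := x) (f := f) (C := ε) ?_
  · rw [Real.norm_eq_abs, sub_zero] at this
    nlinarith
  · intro t ht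
    apply hf
    rw [Set.mem_uIoc] at ht
    rw [abs_le] at hx ⊢
    rcases ht with ht | ht <;> constructor <;> linarith

lemma cyb_tendsto {M : ℝ} {L : C(ℝ, ℝ) →ₗ[ℝ] ℝ} (hL : CybBdd M L)
    {ι : Type*} {l : Filter ι} (F : ι → C(ℝ, ℝ)) (f : C(ℝ, ℝ))
    (hF : ∀ ε > 0, ∀ᶠ i in l, ∀ x, |x| ≤ M → |F i x - f x| ≤ ε) :
    Tendsto (fun i => L (F i)) l (𝓝 (L f)) := by
  obtain ⟨C, hC, h⟩ := hL
  rw [Metric.tendsto_nhds]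
  intro ε hε
  have hpos : 0 < ε / (C + 1) := by positivity
  filter_upwards [hF _ hpos] with i hi
  rw [Real.dist_eq, ← map_sub]
  have := h (F i - f) _ hpos.le (by simpa using hi)
  refine this.trans_lt ?_
  rw [mul_div_assoc', div_lt_iff₀ (by positivity)]
  nlinarith

lemma cyb_shift_atTop {M : ℝ} {φ : C(ℝ, ℝ)} {c : ℝ} (h : Tendsto φ atTop (𝓝 c)) :
    ∀ ε > 0, ∀ᶠ l in atTop, ∀ x, |x| ≤ M → |φ (x + l) - c| ≤ ε := by
  intro ε hε
  obtain ⟨N, hN⟩ := eventually_atTop.1 (Metric.tendsto_nhds.1 h ε hε)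
  filter_upwards [eventually_ge_atTop (N + M)] with l hl x hx
  have := hN (x + l) (by linarith [(abs_le.1 hx).1])
  rw [Real.dist_eq] at this
  exact this.le

lemma cyb_shift_atBot {M : ℝ} {φ : C(ℝ, ℝ)} {c : ℝ} (h : Tendsto φ atBot (𝓝 c)) :
    ∀ ε > 0, ∀ᶠ l in atBot, ∀ x, |x| ≤ M → |φ (x + l) - c| ≤ ε := by
  intro ε hε
  obtain ⟨N, hN⟩ := eventually_atBot.1 (Metric.tendsto_nhds.1 h ε hε)
  filter_upwards [eventually_le_atBot (N - M)] with l hl x hx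
  have := hN (x + l) (by linarith [(abs_le.1 hx).2])
  rw [Real.dist_eq] at this
  exact this.le

lemma cyb_one {M : ℝ} {L : C(ℝ, ℝ) →ₗ[ℝ] ℝ} (hL : CybBdd M L) (φ : C(ℝ, ℝ))
    (h1 : Tendsto φ atTop (𝓝 1)) (h : ∀ l, L (cybShift φ l) = 0) : L 1 = 0 := by
  have := cyb_tendsto hL (l := atTop) (cybShift φ) 1 (by
    intro ε hε
    exact cyb_shift_atTop h1 ε hε)
  simp only [h] at this
  exact (tendsto_nhds_unique this tendsto_const_nhds)

lemma cyb_deriv {M : ℝ} {L : C(ℝ, ℝ) →ₗ[ℝ] ℝ} (hL : CybBdd M L) (φ : C(ℝ, ℝ))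
    (h : ∀ l, L (cybShift φ l) = 0) (a : ℝ) :
    HasDerivAt (fun l => L (cybShift (cybAnti φ) l)) 0 a := by
  obtain ⟨C, hC, hb⟩ := hL
  rw [hasDerivAt_iff_isLittleO, Asymptotics.isLittleO_iff]
  intro c hc
  have hpos : 0 < c / (C + 1) := by positivity
  set K := Set.Icc (-M + a - 1) (M + a + 1) with hK
  have huc : UniformContinuousOn φ K := isCompact_Icc.uniformContinuousOn_of_continuous
    φ.continuous.continuousOn
  obtain ⟨δ, hδ, hδ2⟩ := Metric.uniformContinuousOn_iff.1 huc _ hpos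
  filter_upwards [Metric.ball_mem_nhds a (lt_min hδ one_pos)] with l hl
  rw [Metric.mem_ball, Real.dist_eq, lt_min_iff] at hl
  have hla := abs_lt.1 hl.2
  have key := hb (cybShift (cybAnti φ) l - cybShift (cybAnti φ) a - (l - a) • cybShift φ a)
    (c / (C + 1) * |l - a|) (by positivity) ?_
  · rw [map_sub, map_sub, map_smul, h] at key
    simp only [smul_zero, Real.norm_eq_abs]
    simp only [smul_zero] at key
    refine key.trans ?_
    rw [← mul_assoc]
    gcongr
    rw [mul_div_assoc', div_le_iff₀ (by positivity)]
    nlinarith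
  · intro x hx
    have hx' := abs_le.1 hx
    have e : (cybShift (cybAnti φ) l - cybShift (cybAnti φ) a - (l - a) • cybShift φ a) x
        = ∫ t in (x + a)..(x + l), (φ t - φ (x + a)) := by
      rw [intervalIntegral.integral_sub (φ.continuous.intervalIntegrable _ _)
        intervalIntegrable_const, intervalIntegral.integral_const,
        ← intervalIntegral.integral_interval_sub_left (a := 0)
          (φ.continuous.intervalIntegrable _ _) (φ.continuous.intervalIntegrable _ _)]
      simp [cybShift, cybAnti_apply]
    rw [e]
    have := intervalIntegral.norm_integral_le_of_norm_le_const (a := x + a) (b := x + l)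
      (f := fun t => φ t - φ (x + a)) (C := c / (C + 1)) ?_
    · rw [Real.norm_eq_abs] at this
      convert this using 3
      ring
    · intro t ht
      rw [Set.mem_uIoc] at ht
      have h2 := abs_lt.1 hl.1
      have h3 := hδ2 t ?_ (x + a) ?_ ?_
      · rw [Real.dist_eq] at h3
        exact h3.le
      · rw [hK, Set.mem_Icc]
        rcases ht with ht | ht <;> constructor <;> linarith
      · rw [hK, Set.mem_Icc]
        constructor <;> linarith
      · rw [Real.dist_eq, abs_lt]
        rcases ht with ht | ht <;> constructor <;> linarith

lemma cyb_step {M : ℝ} (hM : 0 ≤ M) {L : C(ℝ, ℝ) →ₗ[ℝ] ℝ} (hL : CybBdd M L) (φ : C(ℝ, ℝ))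
    (h0 : Tendsto φ atBot (𝓝 0)) (h1 : Tendsto φ atTop (𝓝 1))
    (h : ∀ l, L (cybShift φ l) = 0) (l : ℝ) : (L ∘ₗ cybAnti) (cybShift φ l) = 0 := by
  have hone := cyb_one hL φ h1 h
  have e : ∀ l, (L ∘ₗ cybAnti) (cybShift φ l) = L (cybShift (cybAnti φ) l) := by
    intro l
    have : cybAnti (cybShift φ l) = cybShift (cybAnti φ) l - (cybAnti φ l) • (1 : C(ℝ, ℝ)) := by
      ext x
      simp only [cybShift, cybAnti_apply, ContinuousMap.coe_mk, ContinuousMap.sub_apply,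
        ContinuousMap.smul_apply, ContinuousMap.one_apply, smul_eq_mul, mul_one]
      rw [intervalIntegral.integral_interval_sub_left
          (φ.continuous.intervalIntegrable _ _) (φ.continuous.intervalIntegrable _ _),
        intervalIntegral.integral_comp_add_right (fun t => φ t)]
      simp
    rw [LinearMap.comp_apply, this, map_sub, map_smul, hone]
    simp
  have hconst : ∀ a b, L (cybShift (cybAnti φ) a) = L (cybShift (cybAnti φ) b) :=
    is_const_of_deriv_eq_zero (fun a => (cyb_deriv hL φ h a).differentiableAt)
      (fun a => (cyb_deriv hL φ h a).deriv)
  have ht := cyb_tendsto (cybBdd_anti hM hL) (l := atBot) (cybShift φ) 0 (by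
    intro ε hε
    exact cyb_shift_atBot h0 ε hε)
  have hc : ∀ l', (L ∘ₗ cybAnti) (cybShift φ l') = (L ∘ₗ cybAnti) (cybShift φ l) := by
    intro l'
    rw [e, e, hconst]
  simp only [hc, map_zero] at ht
  exact tendsto_nhds_unique tendsto_const_nhds ht

lemma cyb_iter {M : ℝ} (hM : 0 ≤ M) (φ : C(ℝ, ℝ))
    (h0 : Tendsto φ atBot (𝓝 0)) (h1 : Tendsto φ atTop (𝓝 1)) (k : ℕ) :
    ∀ {L : C(ℝ, ℝ) →ₗ[ℝ] ℝ}, CybBdd M L → (∀ l, L (cybShift φ l) = 0) →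
      L (cybAnti^[k] 1) = 0 := by
  induction k with
  | zero => exact fun hL h => cyb_one hL φ h1 h
  | succ k ih =>
    intro L hL h
    rw [Function.iterate_succ_apply']
    exact ih (L := L ∘ₗ cybAnti) (cybBdd_anti hM hL) (cyb_step hM hL φ h0 h1 h)

lemma cybAnti_iter (k : ℕ) (x : ℝ) : (cybAnti^[k] 1) x = x ^ k / (k.factorial : ℝ) := by
  induction k generalizing x with
  | zero => simp
  | succ k ih =>
    rw [Function.iterate_succ_apply', cybAnti_apply]
    simp only [ih]
    rw [intervalIntegral.integral_div, integral_pow, Nat.factorial_succ]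
    have : (k.factorial : ℝ) ≠ 0 := by positivity
    push_cast
    field_simp
    simp

lemma cyb_all {M : ℝ} (hM : 0 ≤ M) (φ : C(ℝ, ℝ))
    (h0 : Tendsto φ atBot (𝓝 0)) (h1 : Tendsto φ atTop (𝓝 1))
    {L : C(ℝ, ℝ) →ₗ[ℝ] ℝ} (hL : CybBdd M L) (h : ∀ l, L (cybShift φ l) = 0) (f : C(ℝ, ℝ)) :
    L f = 0 := by
  have hpow : ∀ p : Polynomial ℝ, L p.toContinuousMap = 0 := by
    intro p
    have : p.toContinuousMap
        = ∑ i ∈ p.support, (p.coeff i * (i.factorial : ℝ)) • (cybAnti^[i] 1) := by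
      ext x
      simp only [Polynomial.toContinuousMap_apply, ContinuousMap.coe_sum, Finset.sum_apply,
        ContinuousMap.smul_apply, cybAnti_iter]
      rw [Polynomial.eval_eq_sum, Polynomial.sum]
      refine Finset.sum_congr rfl fun i _ => ?_
      have : (i.factorial : ℝ) ≠ 0 := by positivity
      simp only [smul_eq_mul]
      field_simp
    rw [this, map_sum]
    refine Finset.sum_eq_zero fun i _ => ?_
    rw [map_smul, cyb_iter hM φ h0 h1 i hL h, smul_zero]
  choose p hp using fun n : ℕ => exists_polynomial_near_of_continuousOn (-M) M f
    f.continuous.continuousOn (1 / ((n : ℝ) + 1)) (by positivity)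
  have ht := cyb_tendsto hL (l := atTop) (fun n => (p n).toContinuousMap) f (by
    intro ε hε
    filter_upwards [(tendsto_one_div_add_atTop_nhds_zero_nat (𝕜 := ℝ)).eventually
      (gt_mem_nhds hε)] with n hn x hx
    exact ((hp n x (abs_le.1 hx)).trans hn).le)
  simp only [hpow] at ht
  exact tendsto_nhds_unique ht tendsto_const_nhds

end Moments

section Riesz

variable {Ω : Type*} [TopologicalSpace Ω] [CompactSpace Ω]

/-- Positive part of a bounded functional, on nonnegative functions. -/
noncomputable def cybPos (L : C(Ω, ℝ) →L[ℝ] ℝ) (f : C(Ω, ℝ)) : ℝ :=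
  sSup (L '' Set.Icc 0 f)

lemma cybPos_bdd (L : C(Ω, ℝ) →L[ℝ] ℝ) (f : C(Ω, ℝ)) : BddAbove (L '' Set.Icc 0 f) := by
  refine ⟨‖L‖ * ‖f‖, ?_⟩
  rintro _ ⟨g, ⟨hg0, hgf⟩, rfl⟩
  refine (le_abs_self _).trans ((L.le_opNorm g).trans ?_)
  gcongr
  rw [ContinuousMap.norm_le _ (norm_nonneg _)]
  intro x
  have hx : 0 ≤ g x := hg0 x
  rw [Real.norm_of_nonneg hx]
  exact (hgf x).trans ((le_abs_self _).trans (f.norm_coe_le_norm x))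

lemma le_cybPos (L : C(Ω, ℝ) →L[ℝ] ℝ) {f g : C(Ω, ℝ)} (hg : 0 ≤ g) (hgf : g ≤ f) :
    L g ≤ cybPos L f :=
  le_csSup (cybPos_bdd L f) ⟨g, ⟨hg, hgf⟩, rfl⟩

lemma cybPos_le (L : C(Ω, ℝ) →L[ℝ] ℝ) {f : C(Ω, ℝ)} (hf : 0 ≤ f) {c : ℝ}
    (h : ∀ g, 0 ≤ g → g ≤ f → L g ≤ c) : cybPos L f ≤ c := by
  refine csSup_le ⟨_, ⟨0, ⟨le_rfl, hf⟩, rfl⟩⟩ ?_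
  rintro _ ⟨g, ⟨hg0, hgf⟩, rfl⟩
  exact h g hg0 hgf

lemma cybPos_nonneg (L : C(Ω, ℝ) →L[ℝ] ℝ) {f : C(Ω, ℝ)} (hf : 0 ≤ f) : 0 ≤ cybPos L f := by
  simpa using le_cybPos L le_rfl hf

lemma cybPos_add (L : C(Ω, ℝ) →L[ℝ] ℝ) {f g : C(Ω, ℝ)} (hf : 0 ≤ f) (hg : 0 ≤ g) :
    cybPos L (f + g) = cybPos L f + cybPos L g := by
  apply le_antisymm
  · refine cybPos_le L (add_nonneg hf hg) fun u hu huf => ?_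
    have h1 := le_cybPos L (le_inf hu hf) (inf_le_right : u ⊓ f ≤ f)
    have h2 := le_cybPos L (f := g) (g := u - u ⊓ f) (sub_nonneg.2 inf_le_left) (by
      intro x
      have h3 : u x ≤ f x + g x := huf x
      have h4 : 0 ≤ g x := hg x
      change u x - u x ⊓ f x ≤ g x
      rcases le_total (u x) (f x) with h | h
      · rw [inf_eq_left.2 h]; linarith
      · rw [inf_eq_right.2 h]; linarith)
    rw [map_sub] at h2
    linarith
  · rw [← le_sub_iff_add_le]
    refine cybPos_le L hf fun u hu huf => ?_
    rw [le_sub_comm]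
    refine cybPos_le L hg fun v hv hvg => ?_
    rw [le_sub_iff_add_le, ← map_add, add_comm v u]
    exact le_cybPos L (add_nonneg hu hv) (add_le_add huf hvg)

lemma cybPos_smul_le (L : C(Ω, ℝ) →L[ℝ] ℝ) {f : C(Ω, ℝ)} (hf : 0 ≤ f) {c : ℝ} (hc : 0 < c) :
    cybPos L (c • f) ≤ c * cybPos L f := by
  refine cybPos_le L (smul_nonneg hc.le hf) fun u hu huf => ?_
  have := le_cybPos L (f := f) (g := c⁻¹ • u) (smul_nonneg (by positivity) hu) (by
    intro x
    have h3 : u x ≤ c * f x := huf x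
    change c⁻¹ * u x ≤ f x
    rwa [inv_mul_le_iff₀ hc])
  rwa [map_smul, smul_eq_mul, inv_mul_le_iff₀ hc] at this

lemma cybPos_smul (L : C(Ω, ℝ) →L[ℝ] ℝ) {f : C(Ω, ℝ)} (hf : 0 ≤ f) {c : ℝ} (hc : 0 ≤ c) :
    cybPos L (c • f) = c * cybPos L f := by
  rcases hc.eq_or_lt with rfl | hc
  · rw [zero_smul, zero_mul]
    refine le_antisymm (cybPos_le L le_rfl fun g h1 h2 => ?_) (cybPos_nonneg L le_rfl)
    rw [le_antisymm h2 h1, map_zero]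
  · refine le_antisymm (cybPos_smul_le L hf hc) ?_
    have := cybPos_smul_le L (f := c • f) (smul_nonneg hc.le hf) (inv_pos.2 hc)
    rwa [smul_smul, inv_mul_cancel₀ hc.ne', one_smul, ← div_eq_inv_mul, le_div_iff₀ hc,
      mul_comm] at this

variable [T2Space Ω] [MeasurableSpace Ω] [BorelSpace Ω]

open CompactlySupported in
lemma cyb_riesz_pos (P : C(Ω, ℝ) → ℝ) (hP : ∀ f, 0 ≤ f → 0 ≤ P f)
    (hadd : ∀ f g, 0 ≤ f → 0 ≤ g → P (f + g) = P f + P g)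
    (hsmul : ∀ (c : ℝ) f, 0 ≤ c → 0 ≤ f → P (c • f) = c * P f) :
    ∃ μ : Measure Ω, IsFiniteMeasure μ ∧ ∀ f : C(Ω, ℝ), 0 ≤ f → ∫ x, f x ∂μ = P f := by
  let T : C_c(Ω, ℝ≥0) → C(Ω, ℝ) := fun f => ⟨fun x => (f x : ℝ), by fun_prop⟩
  have hT : ∀ f, 0 ≤ T f := fun f x => (f x).2
  let Λ : C_c(Ω, ℝ≥0) →ₗ[ℝ≥0] ℝ≥0 :=
    { toFun := fun f => ⟨P (T f), hP _ (hT f)⟩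
      map_add' := by
        intro f g
        apply NNReal.eq
        have : T (f + g) = T f + T g := by ext x; simp [T]
        change P (T (f + g)) = P (T f) + P (T g)
        rw [this, hadd _ _ (hT f) (hT g)]
      map_smul' := by
        intro c f
        apply NNReal.eq
        have : T (c • f) = (c : ℝ) • T f := by ext x; simp [T]
        change P (T (c • f)) = c * P (T f)
        rw [this]
        exact hsmul (c : ℝ) (T f) c.coe_nonneg (hT f) }
  refine ⟨NNRealRMK.rieszMeasure Λ, ⟨isCompact_univ.measure_lt_top⟩, fun f hf => ?_⟩
  let g : C_c(Ω, ℝ≥0) :=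
    { toFun := fun x => (f x).toNNReal
      continuous_toFun := by fun_prop
      hasCompactSupport' := HasCompactSupport.of_compactSpace _ }
  have hg : ∀ x, ((g x : ℝ≥0) : ℝ) = f x := fun x => Real.coe_toNNReal _ (hf x)
  have h := NNRealRMK.integral_rieszMeasure Λ g
  simp only [hg] at h
  rw [h]
  change P (T g) = P f
  congr 1
  ext x
  exact hg x

lemma cyb_integrable (μ : Measure Ω) [IsFiniteMeasure μ] (f : C(Ω, ℝ)) : Integrable f μ :=
  f.continuous.integrable_of_hasCompactSupport (HasCompactSupport.of_compactSpace _)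

lemma cyb_riesz (L : C(Ω, ℝ) →L[ℝ] ℝ) : ∃ μ ν : Measure Ω, IsFiniteMeasure μ ∧
    IsFiniteMeasure ν ∧ ∀ f : C(Ω, ℝ), L f = ∫ x, f x ∂μ - ∫ x, f x ∂ν := by
  obtain ⟨μ, hμ, h1⟩ := cyb_riesz_pos (cybPos L) (fun f hf => cybPos_nonneg L hf)
    (fun f g hf hg => cybPos_add L hf hg) (fun c f hc hf => cybPos_smul L hf hc)
  obtain ⟨ν, hν, h2⟩ := cyb_riesz_pos (fun f => cybPos L f - L f)
    (fun f hf => sub_nonneg.2 (le_cybPos L hf le_rfl))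
    (fun f g hf hg => by
      simp only [cybPos_add L hf hg, map_add]; ring)
    (fun c f hc hf => by
      simp only [cybPos_smul L hf hc, map_smul, smul_eq_mul]; ring)
  refine ⟨μ, ν, hμ, hν, fun f => ?_⟩
  have hp : ∀ f : C(Ω, ℝ), 0 ≤ f → L f = ∫ x, f x ∂μ - ∫ x, f x ∂ν := by
    intro f hf
    rw [h1 f hf, h2 f hf]; ring
  let c : C(Ω, ℝ) := ContinuousMap.const Ω ‖f‖
  have hc : 0 ≤ c := fun x => norm_nonneg f
  have hfc : 0 ≤ f + c := by
    intro x
    have := neg_le_of_abs_le (f.norm_coe_le_norm x)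
    change 0 ≤ f x + ‖f‖
    linarith
  have e1 := hp _ hc
  have e2 := hp _ hfc
  have i1 : ∀ (ρ : Measure Ω) [IsFiniteMeasure ρ],
      ∫ x, (f + c) x ∂ρ = ∫ x, f x ∂ρ + ∫ x, c x ∂ρ := by
    intro ρ _
    exact integral_add (cyb_integrable ρ f) (cyb_integrable ρ c)
  rw [map_add, i1, i1] at e2
  linarith

lemma cyb_main (𝒲 : Set (Ω → ℝ)) (h𝒲 : ∀ X ∈ 𝒲, Continuous X)
    (hsep : ∀ μ₁ μ₂ : Measure Ω, IsFiniteMeasure μ₁ → IsFiniteMeasure μ₂ →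
      (∀ X ∈ 𝒲, ∀ s : ℝ,
        μ₁ {ω | s < X ω} = μ₂ {ω | s < X ω} ∧ μ₁ {ω | X ω = s} = μ₂ {ω | X ω = s}) →
      μ₁ = μ₂)
    (φ : ℝ → ℝ) (hφ : Continuous φ)
    (h0 : Tendsto φ atBot (𝓝 0)) (h1 : Tendsto φ atTop (𝓝 1)) :
    Dense (Submodule.span ℝ
      {g : C(Ω, ℝ) | ∃ X ∈ 𝒲, ∃ lam : ℝ, ⇑g = fun ω => φ (X ω + lam)} : Set C(Ω, ℝ)) := by
  set V := Submodule.span ℝ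
      {g : C(Ω, ℝ) | ∃ X ∈ 𝒲, ∃ lam : ℝ, ⇑g = fun ω => φ (X ω + lam)} with hV
  by_contra hnd
  obtain ⟨f₀, hf₀⟩ : ∃ f₀, f₀ ∉ closure (V : Set C(Ω, ℝ)) := by
    simpa [Dense] using hnd
  obtain ⟨L, u, hLu, huf⟩ := geometric_hahn_banach_closed_point
    (V.convex.closure) isClosed_closure hf₀
  have hu : 0 < u := by simpa using hLu 0 (subset_closure V.zero_mem)
  have hLV : ∀ v ∈ V, L v = 0 := by
    intro v hv
    by_contra hne
    have := hLu (((u + 1) / L v) • v) (subset_closure (V.smul_mem _ hv))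
    rw [map_smul, smul_eq_mul, div_mul_cancel₀ _ hne] at this
    linarith
  obtain ⟨μ, ν, hμ, hν, hL⟩ := cyb_riesz L
  have hμν : μ = ν := by
    refine hsep μ ν hμ hν fun X hX s => ?_
    have hXc := h𝒲 X hX
    let X' : C(Ω, ℝ) := ⟨X, hXc⟩
    let L' : C(ℝ, ℝ) →ₗ[ℝ] ℝ :=
      { toFun := fun f => L (f.comp X')
        map_add' := fun f g => by
          rw [← map_add]; rfl
        map_smul' := fun c f => by
          rw [RingHom.id_apply, ← map_smul]; rfl }
    have hb : CybBdd ‖X'‖ L' := by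
      refine ⟨‖L‖, L.opNorm_nonneg, fun f ε hε hf => ?_⟩
      refine (L.le_opNorm _).trans ?_
      gcongr
      rw [ContinuousMap.norm_le _ hε]
      exact fun x => hf _ (X'.norm_coe_le_norm x)
    have hall := cyb_all (norm_nonneg X') ⟨φ, hφ⟩ h0 h1 hb (fun l =>
      hLV _ (Submodule.subset_span ⟨X, hX, l, rfl⟩))
    have hmap : μ.map X = ν.map X := by
      apply ext_of_forall_integral_eq_of_IsFiniteMeasure
      intro f
      rw [integral_map hXc.measurable.aemeasurable f.continuous.aestronglyMeasurable,
        integral_map hXc.measurable.aemeasurable f.continuous.aestronglyMeasurable]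
      have h2 : L (f.toContinuousMap.comp X') = 0 := hall f.toContinuousMap
      rw [hL] at h2
      exact sub_eq_zero.1 h2
    constructor
    · have := congrArg (fun m => m (Set.Ioi s)) hmap
      simp only [Measure.map_apply hXc.measurable measurableSet_Ioi] at this
      exact this
    · have := congrArg (fun m => m {s}) hmap
      simp only [Measure.map_apply hXc.measurable (measurableSet_singleton s)] at this
      exact this
  have := hL f₀
  rw [hμν, sub_self] at this
  linarith

end Riesz

/-- infinite-dimensional Cybenko theorem: let `Ω = ∏_{j∈ℕ} (ℝ ∪ {∞})` be the
countable product of one-point compactifications of `ℝ`, and let `𝒲` be a separating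
family of continuous random variables `X : Ω → ℝ` (the only finite signed Borel measure
`μ = μ₁ - μ₂` vanishing on all sets `{X > s}` and `{X = s}` is `0`). For any continuous
sigmoidal `φ` the span of `ω ↦ φ(X(ω) + λ)`, `X ∈ 𝒲`, `λ ∈ ℝ`, is uniformly dense in
`C(Ω, ℝ)`. -/
theorem stmt7 (𝒲 : Set ((ℕ → OnePoint ℝ) → ℝ)) (h𝒲 : ∀ X ∈ 𝒲, Continuous X)
    (hsep : ∀ μ₁ μ₂ : @Measure (ℕ → OnePoint ℝ) (borel (ℕ → OnePoint ℝ)),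
      @IsFiniteMeasure _ (borel (ℕ → OnePoint ℝ)) μ₁ →
      @IsFiniteMeasure _ (borel (ℕ → OnePoint ℝ)) μ₂ →
      (∀ X ∈ 𝒲, ∀ s : ℝ,
        μ₁ {ω | s < X ω} = μ₂ {ω | s < X ω} ∧ μ₁ {ω | X ω = s} = μ₂ {ω | X ω = s}) →
      μ₁ = μ₂)
    (φ : ℝ → ℝ) (hφ : Continuous φ)
    (h0 : Tendsto φ atBot (𝓝 0)) (h1 : Tendsto φ atTop (𝓝 1)) :
    Dense (Submodule.span ℝ
      {g : C(ℕ → OnePoint ℝ, ℝ) | ∃ X ∈ 𝒲, ∃ lam : ℝ, ⇑g = fun ω => φ (X ω + lam)} :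
      Set C(ℕ → OnePoint ℝ, ℝ)) := by
  exact @cyb_main (ℕ → OnePoint ℝ) _ _ _ (borel _) (@BorelSpace.mk _ _ (borel _) rfl) 𝒲 h𝒲 hsep φ hφ h0 h1
end

section
/- Let m ≥ 2 and let W ⊂ ℝ^m \ {0} be a finite set. Let ℋ_W denote the closed linear span in L²(J^m) of the functions {x ↦ φ(w·x) : φ : ℝ → ℂ bounded continuous, w ∈ W}, where J^m = [−1,1]^m with Lebesgue measure. Then the orthogonal complement L²(J^m) ⊖ ℋ_W is infinite-dimensional. -/
open MeasureTheory

/-- Lebesgue measure restricted to the cube `J^m = [-1,1]^m`. -/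
noncomputable def cubeMeasure (m : ℕ) : Measure (Fin m → ℝ) :=
  volume.restrict (Set.Icc (-1 : Fin m → ℝ) 1)

/-- Difference operator. -/
noncomputable def diffOp {m : ℕ} (v : Fin m → ℝ) :
    ((Fin m → ℝ) → ℂ) →ₗ[ℂ] ((Fin m → ℝ) → ℂ) where
  toFun f := fun x => f (x + v) - f x
  map_add' f g := by ext x; simp; ring
  map_smul' c f := by ext x; simp; ring

lemma exists_orth {m : ℕ} (hm : 2 ≤ m) (w : Fin m → ℝ) (r : ℝ) (hr : 0 < r) :
    ∃ v : Fin m → ℝ, v ≠ 0 ∧ ‖v‖ ≤ r ∧ ∑ i, w i * v i = 0 := by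
  have h1 : ∃ v : Fin m → ℝ, v ≠ 0 ∧ ∑ i, w i * v i = 0 := by
    let a : Fin m := ⟨0, by omega⟩
    let b : Fin m := ⟨1, by omega⟩
    have hab : a ≠ b := by simp [a, b]
    by_cases h : w a = 0
    · refine ⟨Pi.single a 1, by simp, ?_⟩
      simp [Pi.single_apply, h]
    · refine ⟨Pi.single a (w b) - Pi.single b (w a), ?_, ?_⟩
      · intro h0
        have := congrFun h0 b
        simp [Pi.single_apply, hab.symm, h] at this
      · simp [Pi.single_apply, mul_sub, Finset.sum_sub_distrib]
        ring
  obtain ⟨v, hv, h⟩ := h1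
  have hn : 0 < ‖v‖ := norm_pos_iff.mpr hv
  refine ⟨(r / ‖v‖) • v, smul_ne_zero (by positivity) hv, ?_, ?_⟩
  · rw [norm_smul, Real.norm_of_nonneg (by positivity)]
    field_simp
    exact le_refl _
  · have h3 : ∀ i, w i * ((r / ‖v‖) • v) i = (r / ‖v‖) * (w i * v i) := fun i => by
      simp only [Pi.smul_apply, smul_eq_mul]; ring
    rw [Finset.sum_congr rfl (fun i _ => h3 i), ← Finset.mul_sum, h, mul_zero]

lemma shift_int {m : ℕ} (f : (Fin m → ℝ) → ℂ) (w v : Fin m → ℝ)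
    (φ : BoundedContinuousFunction ℝ ℂ) :
    ∫ x, f (x + v) * φ (∑ i, w i * x i) =
      ∫ x, f x * φ ((∑ i, w i * x i) - ∑ i, w i * v i) := by
  rw [← integral_add_right_eq_self
    (fun x => f x * φ ((∑ i, w i * x i) - ∑ i, w i * v i)) v]
  congr 1
  ext x
  congr 2
  simp [mul_add, Finset.sum_add_distrib]

lemma int_aux {m : ℕ} (f : (Fin m → ℝ) → ℂ) (hf : Continuous f) (r : ℝ)
    (hr : ∀ x, r ≤ ‖x‖ → f x = 0) (w : Fin m → ℝ) (φ : BoundedContinuousFunction ℝ ℂ) :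
    Integrable (fun x => f x * φ (∑ i, w i * x i)) := by
  apply Continuous.integrable_of_hasCompactSupport
  · have := φ.continuous
    fun_prop
  · apply HasCompactSupport.mul_right
    apply HasCompactSupport.intro (isCompact_closedBall (0 : Fin m → ℝ) r)
    intro x hx
    apply hr
    simp at hx
    exact hx.le

lemma main_ind {m : ℕ} (hm : 2 ≤ m) (W : Set (Fin m → ℝ)) (hWfin : W.Finite) :
    ∀ r : ℝ, 0 < r → ∃ L : Polynomial ℂ →ₗ[ℂ] ((Fin m → ℝ) → ℂ), Function.Injective L ∧
      ∀ p, Continuous (L p) ∧ (∀ x, r ≤ ‖x‖ → L p x = 0) ∧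
        ∀ w ∈ W, ∀ φ : BoundedContinuousFunction ℝ ℂ,
          ∫ x, L p x * φ (∑ i, w i * x i) = 0 := by
  induction W, hWfin using Set.Finite.induction_on with
  | empty =>
    intro r hr
    let a : Fin m := ⟨0, by omega⟩
    haveI : Nonempty (Fin m) := ⟨a⟩
    refine ⟨{ toFun := fun p x => ((max 0 (r - ‖x‖) : ℝ) : ℂ) * p.eval ((x a : ℝ) : ℂ)
              map_add' := fun p q => by ext x; simp; ring
              map_smul' := fun p q => by ext x; simp; ring }, ?_, ?_⟩
    · rw [injective_iff_map_eq_zero]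
      intro p hp
      apply Polynomial.eq_zero_of_infinite_isRoot
      have hinf : ((fun t : ℝ => (t : ℂ)) '' Set.Ioo 0 r).Infinite :=
        (Set.Ioo_infinite hr).image Complex.ofReal_injective.injOn
      apply hinf.mono
      rintro _ ⟨t, ht, rfl⟩
      have h := congrFun hp (fun _ => t)
      simp only [LinearMap.coe_mk, AddHom.coe_mk, Pi.zero_apply, mul_eq_zero] at h
      rcases h with h | h
      · exfalso
        rw [pi_norm_const, Real.norm_of_nonneg ht.1.le] at h
        have h' : max 0 (r - t) = 0 := by exact_mod_cast h
        have := ht.2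
        have := le_max_right 0 (r - t)
        linarith
      · exact h
    · intro p
      refine ⟨?_, ?_, by simp⟩
      · have := p.continuous
        simp only [LinearMap.coe_mk, AddHom.coe_mk]
        fun_prop
      · intro x hx
        simp [hx]
  | @insert w W _ _ ih =>
    intro r hr
    obtain ⟨L, hL, hp⟩ := ih (r / 2) (by positivity)
    obtain ⟨v, hv, hvr, hwv⟩ := exists_orth hm w (r / 2) (by positivity)
    have hn : 0 < ‖v‖ := norm_pos_iff.mpr hv
    refine ⟨(diffOp v).comp L, ?_, ?_⟩
    · rw [injective_iff_map_eq_zero]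
      intro p h0
      apply (injective_iff_map_eq_zero L).1 hL
      have hstep : ∀ x, L p (x + v) = L p x := fun x => by
        have := congrFun h0 x
        simpa [diffOp, sub_eq_zero] using this
      have hall : ∀ (n : ℕ) x, L p (x + n • v) = L p x := by
        intro n
        induction n with
        | zero => simp
        | succ n ihn => intro x; rw [succ_nsmul, ← add_assoc, hstep, ihn]
      ext x
      obtain ⟨n, hN⟩ := exists_nat_ge ((r / 2 + ‖x‖) / ‖v‖)
      rw [← hall n x, Pi.zero_apply]
      apply (hp p).2.1
      rw [div_le_iff₀ hn] at hN
      have h1 : ‖n • v‖ = n * ‖v‖ := by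
        rw [← Nat.cast_smul_eq_nsmul ℝ, norm_smul]; simp
      have h2 := norm_sub_le (x + n • v) x
      rw [add_sub_cancel_left, h1] at h2
      linarith
    · intro p
      obtain ⟨hc, hs, ho⟩ := hp p
      have hc' : Continuous (fun x => L p (x + v)) := by fun_prop
      have hs' : ∀ x, r ≤ ‖x‖ → L p (x + v) = 0 := by
        intro x hx
        apply hs
        have h2 := norm_sub_le (x + v) v
        rw [add_sub_cancel_right] at h2
        linarith
      have key : ∀ (u : Fin m → ℝ) (φ : BoundedContinuousFunction ℝ ℂ),
          ∫ x, ((diffOp v).comp L) p x * φ (∑ i, u i * x i) =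
          (∫ x, L p x * φ ((∑ i, u i * x i) - ∑ i, u i * v i)) -
            ∫ x, L p x * φ (∑ i, u i * x i) := by
        intro u φ
        rw [← shift_int, ← integral_sub (int_aux _ hc' r hs' u φ) (int_aux _ hc _ hs u φ)]
        simp [diffOp, sub_mul]
      refine ⟨?_, ?_, ?_⟩
      · exact hc'.sub hc
      · intro x hx
        simp [diffOp, hs' x hx, hs x (by linarith)]
      · intro u hu φ
        rw [key]
        rcases Set.mem_insert_iff.1 hu with rfl | hu
        · simp [hwv]
        · have h1 := ho u hu (φ.compContinuous ⟨fun t => t - ∑ i, u i * v i, by fun_prop⟩)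
          simp only [BoundedContinuousFunction.compContinuous_apply, ContinuousMap.coe_mk] at h1
          rw [h1, ho u hu φ, sub_zero]

/-- for a finite `W ⊂ ℝ^m \ {0}` (`m ≥ 2`), the orthogonal complement in
`L²(J^m)` of the closed span `ℋ_W` of the ridge functions `x ↦ φ(w·x)` (`φ` bounded
continuous, `w ∈ W`) is infinite-dimensional. -/
theorem stmt13 {m : ℕ} (hm : 2 ≤ m) (W : Set (Fin m → ℝ)) (hWfin : W.Finite)
    (hW : ∀ w ∈ W, w ≠ 0) :
    ¬ FiniteDimensional ℂ
      ↥(((Submodule.span ℂ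
          {F : Lp ℂ 2 (cubeMeasure m) | ∃ w ∈ W, ∃ φ : BoundedContinuousFunction ℝ ℂ,
            ⇑F =ᵐ[cubeMeasure m] fun x => φ (∑ i, w i * x i)}).topologicalClosure)ᗮ) := by
  intro hfin
  obtain ⟨L, hL, hp⟩ := main_ind hm W hWfin 1 one_pos
  have hball : ∀ x : Fin m → ℝ, x ∉ Set.Icc (-1 : Fin m → ℝ) 1 → 1 ≤ ‖x‖ := by
    intro x hx
    by_contra h
    push Not at h
    apply hx
    have h2 : ∀ i, |x i| ≤ 1 := fun i => (norm_le_pi_norm x i).trans h.le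
    exact ⟨fun i => (abs_le.1 (h2 i)).1, fun i => (abs_le.1 (h2 i)).2⟩
  have hmem : ∀ p, MemLp (L p) 2 (cubeMeasure m) := by
    intro p
    apply MemLp.restrict
    apply (hp p).1.memLp_of_hasCompactSupport
    apply HasCompactSupport.intro (isCompact_Icc (a := (-1 : Fin m → ℝ)) (b := 1))
    intro x hx
    exact (hp p).2.1 x (hball x hx)
  let T : Polynomial ℂ →ₗ[ℂ] Lp ℂ 2 (cubeMeasure m) :=
    { toFun := fun p => (hmem p).toLp
      map_add' := fun p q => by
        rw [← MemLp.toLp_add]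
        congr 1
        exact map_add L p q
      map_smul' := fun c p => by
        rw [RingHom.id_apply, ← MemLp.toLp_const_smul]
        congr 1
        exact map_smul L c p }
  have hT : ∀ p, T p = (hmem p).toLp := fun p => rfl
  have hinj : Function.Injective T := by
    rw [injective_iff_map_eq_zero]
    intro p h0
    apply (injective_iff_map_eq_zero L).1 hL
    rw [hT, Lp.eq_zero_iff_ae_eq_zero] at h0
    replace h0 := (hmem p).coeFn_toLp.symm.trans h0
    have h1 : L p =ᵐ[volume] 0 := by
      have h2 := (ae_restrict_iff' (measurableSet_Icc)).1 h0
      filter_upwards [h2] with x hx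
      by_cases hxm : x ∈ Set.Icc (-1 : Fin m → ℝ) 1
      · exact hx hxm
      · exact (hp p).2.1 x (hball x hxm)
    exact (Continuous.ae_eq_iff_eq volume (hp p).1 continuous_zero).1 h1
  have horth : ∀ p, T p ∈ ((Submodule.span ℂ
          {F : Lp ℂ 2 (cubeMeasure m) | ∃ w ∈ W, ∃ φ : BoundedContinuousFunction ℝ ℂ,
            ⇑F =ᵐ[cubeMeasure m] fun x => φ (∑ i, w i * x i)}).topologicalClosure)ᗮ := by
    intro p
    rw [Submodule.orthogonal_closure, Submodule.mem_orthogonal]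
    intro u hu
    induction hu using Submodule.span_induction with
    | zero => simp
    | add x y _ _ hx hy => rw [inner_add_left, hx, hy, add_zero]
    | smul c x _ hx => rw [inner_smul_left, hx, mul_zero]
    | mem F hF =>
      obtain ⟨w, hw, φ, hφ⟩ := hF
      rw [L2.inner_def]
      have h1 : ∫ a, inner ℂ (F a) (T p a) ∂(cubeMeasure m) =
          ∫ a, L p a * (star φ) (∑ i, w i * a i) ∂(cubeMeasure m) := by
        apply integral_congr_ae
        filter_upwards [hφ, (hmem p).coeFn_toLp] with x hx hx2
        rw [hT, hx2, hx]
        simp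
      rw [h1, cubeMeasure, setIntegral_eq_integral_of_forall_compl_eq_zero]
      · exact (hp p).2.2 w hw (star φ)
      · intro x hx
        rw [(hp p).2.1 x (hball x hx), zero_mul]
  have hfin2 : Module.Finite ℂ (Polynomial ℂ) :=
    Module.Finite.of_injective (T.codRestrict _ horth)
      (fun a b h => hinj (congrArg Subtype.val h))
  exact Polynomial.not_finite hfin2
end

section
/- Let m ≥ 1 and let w, w' ∈ ℤ^m \ {0} be inequivalent, meaning k w ≠ l w' for all nonzero integers k, l. Let φ, ψ : ℝ → ℂ be continuous and 2-periodic (φ(s+2) = φ(s), ψ(s+2) = ψ(s) for all s) with mean zero: ∫_{−1}^{1} φ(s) ds = 0 and ∫_{−1}^{1} ψ(s) ds = 0. Then the functions x ↦ φ(w·x) and x ↦ ψ(w'·x) are orthogonal in L²(J^m): ∫_{J^m} φ(w·x) conj(ψ(w'·x)) d^m x = 0. -/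
open MeasureTheory

lemma box_fubini {n : ℕ} (i : Fin (n+1)) (G : (Fin (n+1) → ℝ) → ℂ) (hG : Continuous G) :
    ∫ x in Set.Icc (-1 : Fin (n+1) → ℝ) 1, G x =
      ∫ t in (-1:ℝ)..1, ∫ y in Set.Icc (-1 : Fin n → ℝ) 1, G (i.insertNth t y) := by
  have mp := (volume_preserving_piFinSuccAbove (fun _ : Fin (n+1) => ℝ) i).symm
  have key := mp.setIntegral_preimage_emb (MeasurableEquiv.measurableEmbedding _) G
    (Set.Icc (-1 : Fin (n+1) → ℝ) 1)
  have hpre : (MeasurableEquiv.piFinSuccAbove (fun _ : Fin (n+1) => ℝ) i).symm ⁻¹'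
      (Set.Icc (-1 : Fin (n+1) → ℝ) 1) =
      Set.Icc (-1:ℝ) 1 ×ˢ Set.Icc (-1 : Fin n → ℝ) 1 := by
    ext ⟨t, y⟩
    have : (MeasurableEquiv.piFinSuccAbove (fun _ : Fin (n+1) => ℝ) i).symm (t, y)
      = i.insertNth t y := rfl
    rw [Set.mem_preimage, this, Fin.insertNth_mem_Icc]
    simp only [Set.mem_prod, Set.mem_Icc, Pi.le_def, Pi.neg_apply, Pi.one_apply]
  have hval : ∀ p : ℝ × (Fin n → ℝ),
      (MeasurableEquiv.piFinSuccAbove (fun _ : Fin (n+1) => ℝ) i).symm p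
      = i.insertNth p.1 p.2 := fun p => rfl
  rw [hpre] at key
  rw [← key, intervalIntegral.integral_of_le (by norm_num), ← integral_Icc_eq_integral_Ioc]
  simp only [hval]
  rw [Measure.volume_eq_prod]
  apply setIntegral_prod
  apply ContinuousOn.integrableOn_compact (isCompact_Icc.prod isCompact_Icc)
  apply Continuous.continuousOn
  apply hG.comp
  exact Continuous.finInsertNth (A := fun _ => ℝ) i continuous_fst continuous_snd

lemma box_shift {n : ℕ} (i : Fin (n+1)) (G : (Fin (n+1) → ℝ) → ℂ) (hG : Continuous G)
    (hper : ∀ x, G (x + Pi.single i 2) = G x) (s : ℝ) :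
    ∫ x in Set.Icc (-1 : Fin (n+1) → ℝ) 1, G (x + Pi.single i s) =
      ∫ x in Set.Icc (-1 : Fin (n+1) → ℝ) 1, G x := by
  have hins : ∀ (t s : ℝ) (y : Fin n → ℝ),
      (i.insertNth t y : Fin (n+1) → ℝ) + Pi.single i s = i.insertNth (t + s) y := by
    intro t s y
    ext j
    refine Fin.succAboveCases i ?_ ?_ j
    · simp
    · intro k; simp
  rw [box_fubini i _ (by fun_prop), box_fubini i G hG]
  simp only [hins]
  set H : ℝ → ℂ := fun t => ∫ y in Set.Icc (-1 : Fin n → ℝ) 1, G (i.insertNth t y) with hH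
  have hHp : Function.Periodic H 2 := by
    intro t
    simp only [hH, ← hins, hper]
  have h1 := intervalIntegral.integral_comp_add_right (a := -1) (b := 1) H s
  have h2 := hHp.intervalIntegral_add_eq (-1 + s) (-1)
  change ∫ t in (-1:ℝ)..1, H (t + s) = ∫ t in (-1:ℝ)..1, H t
  rw [h1]
  convert h2 using 2 <;> ring

/-- if `w, w' ∈ ℤ^m \ {0}` are inequivalent (`kw ≠ lw'` for all nonzero
integers `k, l`) and `φ, ψ : ℝ → ℂ` are continuous, `2`-periodic, with mean zero over
`[-1,1]`, then the ridge functions `x ↦ φ(w·x)` and `x ↦ ψ(w'·x)` are orthogonal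
in `L²(J^m)`. -/
theorem stmt15 {m : ℕ} (hm : 1 ≤ m) (w w' : Fin m → ℤ) (hw : w ≠ 0) (hw' : w' ≠ 0)
    (hineq : ∀ k l : ℤ, k ≠ 0 → l ≠ 0 → k • w ≠ l • w')
    (φ ψ : ℝ → ℂ) (hφ : Continuous φ) (hψ : Continuous ψ)
    (hφp : ∀ s : ℝ, φ (s + 2) = φ s) (hψp : ∀ s : ℝ, ψ (s + 2) = ψ s)
    (hφ0 : (∫ s in (-1 : ℝ)..1, φ s) = 0) (hψ0 : (∫ s in (-1 : ℝ)..1, ψ s) = 0) :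
    ∫ x in Set.Icc (-1 : Fin m → ℝ) 1,
      φ (∑ i, (w i : ℝ) * x i) * (starRingEnd ℂ) (ψ (∑ i, (w' i : ℝ) * x i)) = 0 := by
  obtain ⟨n, rfl⟩ : ∃ n, m = n + 1 := ⟨m - 1, by omega⟩
  obtain ⟨i, j, hd⟩ : ∃ i j, w i * w' j - w j * w' i ≠ 0 := by
    by_contra! h
    obtain ⟨a, ha⟩ := Function.ne_iff.mp hw
    obtain ⟨b, hb⟩ := Function.ne_iff.mp hw'
    simp only [Pi.zero_apply] at ha hb
    have hwb : w b ≠ 0 := by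
      intro h0
      have := h a b
      rw [h0] at this
      simp [ha, hb] at this
    refine hineq (w' b) (w b) hb hwb ?_
    ext k
    have := h k b
    simp only [Pi.smul_apply, smul_eq_mul]
    linarith
  set d : ℤ := w i * w' j - w j * w' i with hdd
  have hlin : ∀ (u : Fin (n+1) → ℤ) (x : Fin (n+1) → ℝ) (k : Fin (n+1)) (s : ℝ),
      ∑ l, (u l : ℝ) * (x + Pi.single k s : Fin (n+1) → ℝ) l
        = ∑ l, (u l : ℝ) * x l + u k * s := by
    intro u x k s
    simp [mul_add, Finset.sum_add_distrib, Pi.single_apply]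
  have hφP : Function.Periodic φ 2 := hφp
  have hψP : Function.Periodic ψ 2 := hψp
  set F : (Fin (n+1) → ℝ) → ℂ := fun x =>
    φ (∑ i, (w i : ℝ) * x i) * (starRingEnd ℂ) (ψ (∑ i, (w' i : ℝ) * x i)) with hF
  have hFc : Continuous F := by
    have := Complex.continuous_conj
    refine Continuous.mul (by fun_prop) (this.comp (by fun_prop))
  have hFp : ∀ k x, F (x + Pi.single k 2) = F x := by
    intro k x
    simp only [hF, hlin]
    rw [hφP.int_mul (w k) _, hψP.int_mul (w' k) _]
  have hshift : ∀ s : ℝ, ∫ x in Set.Icc (-1 : Fin (n+1) → ℝ) 1,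
      φ (∑ i, (w i : ℝ) * x i + d * s) * (starRingEnd ℂ) (ψ (∑ i, (w' i : ℝ) * x i))
      = ∫ x in Set.Icc (-1 : Fin (n+1) → ℝ) 1, F x := by
    intro s
    have e1 := box_shift i F hFc (hFp i) (w' j * s)
    have e2 := box_shift j (fun x => F (x + Pi.single i (w' j * s))) (by fun_prop) (by
        intro x
        rw [add_right_comm, hFp]) (-(w' i * s))
    rw [← e1, ← e2]
    congr 1
    ext x
    simp only [hF, hlin]
    congr 2
    · rw [hdd]; push_cast; ring
    · congr 1; ring
  have hzero : ∀ c : ℝ, ∫ s in (-1:ℝ)..1, φ (c + d * s) = 0 := by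
    intro c
    have hd' : (d:ℝ) ≠ 0 := by exact_mod_cast hd
    rw [intervalIntegral.integral_comp_add_mul φ hd' c]
    have h1 := hφP.intervalIntegral_add_zsmul_eq d (c + d * (-1))
      (fun a b => hφ.intervalIntegrable a b)
    have h2 := hφP.intervalIntegral_add_eq (c + d * (-1)) (-1)
    have h3 : c + (d:ℝ) * (-1) + d • (2:ℝ) = c + d * 1 := by simp; ring
    have h4 : (-1:ℝ) + 2 = 1 := by norm_num
    rw [h3] at h1
    rw [h4, hφ0] at h2
    rw [h1, h2]
    simp
  have hsw : ∫ s in (-1:ℝ)..1, (∫ x in Set.Icc (-1 : Fin (n+1) → ℝ) 1,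
      φ (∑ i, (w i : ℝ) * x i + d * s) * (starRingEnd ℂ) (ψ (∑ i, (w' i : ℝ) * x i))) = 0 := by
    rw [intervalIntegral.integral_of_le (by norm_num), ← integral_Icc_eq_integral_Ioc,
      integral_integral_swap]
    · refine integral_eq_zero_of_ae (Filter.Eventually.of_forall fun x => ?_)
      simp only [Pi.zero_apply]
      rw [integral_mul_const, integral_Icc_eq_integral_Ioc,
        ← intervalIntegral.integral_of_le (by norm_num), hzero, zero_mul]
    · rw [Measure.prod_restrict]
      apply ContinuousOn.integrableOn_compact (isCompact_Icc.prod isCompact_Icc)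
      apply Continuous.continuousOn
      have := Complex.continuous_conj
      refine Continuous.mul (by fun_prop) (this.comp (by fun_prop))
  simp only [hshift] at hsw
  rw [intervalIntegral.integral_const] at hsw
  norm_num at hsw
  exact hsw
end

section
/- Let m ≥ 1 and let w, w' ∈ ℤ^m \ {0} be inequivalent (k w ≠ l w' for all nonzero integers k, l). Define ℋ'(w) to be the closed linear span in L²(J^m) of the mean-zero functions x ↦ φ(w·x) with φ : ℝ → ℂ continuous, 2-periodic, and ∫_{−1}^1 φ = 0; define ℋ'(w') analogously. Then the closed subspaces ℋ'(w) and ℋ'(w') of L²(J^m) are orthogonal: ⟨F, F'⟩_{L²(J^m)} = 0 for every F ∈ ℋ'(w) and F' ∈ ℋ'(w'). -/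
open MeasureTheory

/-- `ℋ'(w)`: the closed linear span in `L²(J^m)` of the ridge functions `x ↦ φ(w·x)`
with `φ : ℝ → ℂ` continuous, `2`-periodic and of mean zero over `[-1,1]`. -/
noncomputable def ridgeSpace' (m : ℕ) (w : Fin m → ℤ) :
    Submodule ℂ (Lp ℂ 2 (cubeMeasure m)) :=
  (Submodule.span ℂ
    {F : Lp ℂ 2 (cubeMeasure m) | ∃ φ : ℝ → ℂ, Continuous φ ∧
      (∀ s : ℝ, φ (s + 2) = φ s) ∧ (∫ s in (-1 : ℝ)..1, φ s) = 0 ∧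
      ⇑F =ᵐ[cubeMeasure m] fun x => φ (∑ i, (w i : ℝ) * x i)}).topologicalClosure

/-- An integer vector orthogonal to `w` but not to `w'`. -/
lemma exists_dir {m : ℕ} (w w' : Fin m → ℤ) (hw : w ≠ 0) (hw' : w' ≠ 0)
    (hineq : ∀ k l : ℤ, k ≠ 0 → l ≠ 0 → k • w ≠ l • w') :
    ∃ v : Fin m → ℤ, w ⬝ᵥ v = 0 ∧ w' ⬝ᵥ v ≠ 0 := by
  refine ⟨(w ⬝ᵥ w) • w' - (w ⬝ᵥ w') • w, ?_, ?_⟩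
  · simp only [dotProduct_sub, dotProduct_smul, smul_eq_mul]; ring
  · intro h
    have ha : w ⬝ᵥ w ≠ 0 := by simpa using hw
    have h1 : w ⬝ᵥ ((w ⬝ᵥ w) • w' - (w ⬝ᵥ w') • w) = 0 := by
      simp only [dotProduct_sub, dotProduct_smul, smul_eq_mul]; ring
    have h2 : ((w ⬝ᵥ w) • w' - (w ⬝ᵥ w') • w) ⬝ᵥ ((w ⬝ᵥ w) • w' - (w ⬝ᵥ w') • w) = 0 := by
      rw [sub_dotProduct, smul_dotProduct, smul_dotProduct, h, h1]; simp
    have h3 : (w ⬝ᵥ w) • w' = (w ⬝ᵥ w') • w := by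
      rw [dotProduct_self_eq_zero] at h2
      exact sub_eq_zero.mp h2
    by_cases hb : w ⬝ᵥ w' = 0
    · rw [hb, zero_smul, smul_eq_zero] at h3
      exact h3.elim ha hw'
    · exact hineq _ _ hb ha h3.symm

/-- The homomorphism `n ↦ 2 n`, whose range is the period lattice. -/
def latHom (m : ℕ) : (Fin m → ℤ) →+ (Fin m → ℝ) where
  toFun n := fun i => (n i : ℝ) * 2
  map_zero' := by ext; simp
  map_add' a b := by ext i; simp [add_mul]

lemma fundDom (m : ℕ) (a : Fin m → ℝ) :
    IsAddFundamentalDomain (latHom m).range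
      (Set.pi Set.univ (fun i => Set.Ioc (a i) (a i + 2))) (volume : Measure (Fin m → ℝ)) := by
  refine IsAddFundamentalDomain.mk'
    (MeasurableSet.univ_pi fun i => measurableSet_Ioc).nullMeasurableSet ?_
  intro x
  have h : ∀ i, ∃! n : ℤ, x i + n • (2 : ℝ) ∈ Set.Ioc (a i) (a i + 2) := fun i =>
    existsUnique_add_zsmul_mem_Ioc two_pos (x i) (a i)
  choose n hn hu using h
  refine ⟨⟨latHom m n, n, rfl⟩, ?_, ?_⟩
  · intro i _
    have := hn i
    simp only [zsmul_eq_mul] at this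
    change (n i : ℝ) * 2 + x i ∈ _
    rwa [add_comm]
  · rintro ⟨_, k, rfl⟩ hk
    have : k = n := by
      ext i
      apply hu i
      have := hk i trivial
      change (k i : ℝ) * 2 + x i ∈ _ at this
      simp only [zsmul_eq_mul]
      rwa [add_comm (x i)]
    subst this; rfl

lemma cube_eq (m : ℕ) (G : (Fin m → ℝ) → ℂ) :
    ∫ x, G x ∂(cubeMeasure m) =
      ∫ x in Set.pi Set.univ (fun _ : Fin m => Set.Ioc (-1 : ℝ) (-1 + 2)), G x := by
  unfold cubeMeasure
  have h := (Measure.univ_pi_Ioc_ae_eq_Icc (μ := fun _ : Fin m => (volume : Measure ℝ))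
    (f := (-1 : Fin m → ℝ)) (g := 1))
  rw [← volume_pi] at h
  rw [← setIntegral_congr_set h]
  norm_num

/-- Integrals of periodic functions over the cube are translation invariant. -/
lemma cube_translate (m : ℕ) (G : (Fin m → ℝ) → ℂ)
    (hG : ∀ (n : Fin m → ℤ) x, G (latHom m n + x) = G x) (v : Fin m → ℝ) :
    ∫ x, G (x + v) ∂(cubeMeasure m) = ∫ x, G x ∂(cubeMeasure m) := by
  rw [cube_eq, cube_eq]
  have : Countable (latHom m).range := (Set.countable_range (latHom m)).to_subtype
  have h1 : ∀ (g : (latHom m).range) x, G (g +ᵥ x) = G x := by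
    rintro ⟨_, n, rfl⟩ x
    exact hG n x
  rw [← (fundDom m (fun i => -1 + v i)).setIntegral_eq (fundDom m (fun _ => -1)) h1]
  rw [← (measurePreserving_add_right (volume : Measure (Fin m → ℝ)) v).setIntegral_preimage_emb
    (measurableEmbedding_addRight v) G
    (Set.pi Set.univ (fun i => Set.Ioc (-1 + v i) (-1 + v i + 2)))]
  congr 2
  ext x
  simp only [Set.mem_pi, Set.mem_univ, Set.mem_Ioc, Set.mem_preimage, Pi.add_apply, true_imp_iff]
  refine forall_congr' fun i => ?_
  constructor <;> rintro ⟨h1, h2⟩ <;> constructor <;> linarith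

lemma mean_zero (ψ : ℝ → ℂ) (hc : Continuous ψ) (hp : ∀ s, ψ (s + 2) = ψ s)
    (h0 : ∫ s in (-1 : ℝ)..1, ψ s = 0) (n : ℤ) (hn : n ≠ 0) (d : ℝ) :
    ∫ t in (0 : ℝ)..2, ψ (d + n * t) = 0 := by
  have hP : Function.Periodic ψ 2 := hp
  rw [intervalIntegral.integral_comp_add_mul _ (by exact_mod_cast hn)]
  have h := hP.intervalIntegral_add_zsmul_eq n d (fun _ _ => hc.intervalIntegrable _ _)
  have h2 := hP.intervalIntegral_add_eq d (-1)
  norm_num at h2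
  rw [h2, h0] at h
  simp only [zsmul_eq_mul, mul_zero] at h
  simp [h]

lemma ridge_per {m : ℕ} (φ : ℝ → ℂ) (hp : ∀ s, φ (s + 2) = φ s) (w n : Fin m → ℤ)
    (x : Fin m → ℝ) :
    φ (∑ i, (w i : ℝ) * (latHom m n + x) i) = φ (∑ i, (w i : ℝ) * x i) := by
  have hP : Function.Periodic φ 2 := hp
  have : ∑ i, (w i : ℝ) * (latHom m n + x) i
      = (∑ i, (w i : ℝ) * x i) + ((∑ i, w i * n i : ℤ) : ℝ) * 2 := by
    push_cast
    rw [Finset.sum_mul, ← Finset.sum_add_distrib]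
    refine Finset.sum_congr rfl fun i _ => ?_
    change (w i : ℝ) * ((n i : ℝ) * 2 + x i) = _
    ring
  rw [this]
  exact hP.int_mul _ _

lemma ridge_line {m : ℕ} (w v : Fin m → ℤ) (x : Fin m → ℝ) (t : ℝ) :
    ∑ i, (w i : ℝ) * (x + fun i => t * (v i : ℝ)) i
      = (∑ i, (w i : ℝ) * x i) + ((w ⬝ᵥ v : ℤ) : ℝ) * t := by
  simp only [dotProduct]
  push_cast
  rw [Finset.sum_mul, ← Finset.sum_add_distrib]
  refine Finset.sum_congr rfl fun i _ => ?_
  simp only [Pi.add_apply]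
  ring

lemma key {m : ℕ} (w w' : Fin m → ℤ) (hw : w ≠ 0) (hw' : w' ≠ 0)
    (hineq : ∀ k l : ℤ, k ≠ 0 → l ≠ 0 → k • w ≠ l • w')
    (φ ψ : ℝ → ℂ) (hφ : Continuous φ) (hψ : Continuous ψ)
    (pφ : ∀ s, φ (s + 2) = φ s) (pψ : ∀ s, ψ (s + 2) = ψ s)
    (h0 : ∫ s in (-1 : ℝ)..1, ψ s = 0) :
    ∫ x, φ (∑ i, (w i : ℝ) * x i) * ψ (∑ i, (w' i : ℝ) * x i) ∂(cubeMeasure m) = 0 := by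
  obtain ⟨v, hv, hv'⟩ := exists_dir w w' hw hw' hineq
  set I := ∫ x, φ (∑ i, (w i : ℝ) * x i) * ψ (∑ i, (w' i : ℝ) * x i) ∂(cubeMeasure m) with hI
  have h1 : ∀ t : ℝ, ∫ x, φ (∑ i, (w i : ℝ) * x i) *
      ψ ((∑ i, (w' i : ℝ) * x i) + ((w' ⬝ᵥ v : ℤ) : ℝ) * t) ∂(cubeMeasure m) = I := by
    intro t
    rw [hI, ← cube_translate m
      (fun x => φ (∑ i, (w i : ℝ) * x i) * ψ (∑ i, (w' i : ℝ) * x i))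
      (fun n x => by simp only [ridge_per φ pφ, ridge_per ψ pψ]) (fun i => t * (v i : ℝ))]
    simp only [ridge_line, hv]
    simp
  have h2 : ∫ t in Set.Ioc (0 : ℝ) 2, (∫ x, φ (∑ i, (w i : ℝ) * x i) *
      ψ ((∑ i, (w' i : ℝ) * x i) + ((w' ⬝ᵥ v : ℤ) : ℝ) * t) ∂(cubeMeasure m)) = 2 * I := by
    simp_rw [h1]
    simp
  have : SFinite (cubeMeasure m) := by unfold cubeMeasure; infer_instance
  rw [integral_integral_swap] at h2
  · have h3 : ∀ x : Fin m → ℝ, ∫ t in Set.Ioc (0 : ℝ) 2, φ (∑ i, (w i : ℝ) * x i) *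
      ψ ((∑ i, (w' i : ℝ) * x i) + ((w' ⬝ᵥ v : ℤ) : ℝ) * t) = 0 := by
      intro x
      rw [← intervalIntegral.integral_of_le zero_le_two,
        intervalIntegral.integral_const_mul, mean_zero ψ hψ pψ h0 _ hv', mul_zero]
    simp_rw [h3] at h2
    simpa using h2.symm
  · unfold cubeMeasure
    rw [Measure.prod_restrict]
    change IntegrableOn _ _ _
    refine IntegrableOn.mono_set ?_ (Set.prod_mono Set.Ioc_subset_Icc_self subset_rfl)
    refine ContinuousOn.integrableOn_compact (isCompact_Icc.prod isCompact_Icc) ?_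
    refine Continuous.continuousOn ?_
    unfold Function.uncurry
    fun_prop

/-- for inequivalent `w, w' ∈ ℤ^m \ {0}`, the closed subspaces `ℋ'(w)` and
`ℋ'(w')` of `L²(J^m)` are mutually orthogonal. -/
theorem stmt16 {m : ℕ} (hm : 1 ≤ m) (w w' : Fin m → ℤ) (hw : w ≠ 0) (hw' : w' ≠ 0)
    (hineq : ∀ k l : ℤ, k ≠ 0 → l ≠ 0 → k • w ≠ l • w') :
    ∀ F ∈ ridgeSpace' m w, ∀ F' ∈ ridgeSpace' m w',
      @inner ℂ _ _ F F' = 0 := by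
  rw [← Submodule.isOrtho_iff_inner_eq]
  unfold ridgeSpace'
  rw [Submodule.isOrtho_iff_le, Submodule.orthogonal_closure]
  refine Submodule.topologicalClosure_minimal _ ?_ (Submodule.isClosed_orthogonal _)
  rw [← Submodule.isOrtho_iff_le, Submodule.isOrtho_span]
  rintro F ⟨φ, cφ, pφ, -, hF⟩ F' ⟨ψ, cψ, pψ, h0, hF'⟩
  rw [L2.inner_def]
  rw [← key w w' hw hw' hineq (fun s => starRingEnd ℂ (φ s)) ψ
    (Complex.continuous_conj.comp cφ) cψ (fun s => by simp only [pφ]) pψ h0]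
  refine integral_congr_ae ?_
  filter_upwards [hF, hF'] with x h h'
  rw [h, h', RCLike.inner_apply, mul_comm]
end

section
/- Let m ≥ 1 and let W ⊆ ℤ^m \ {0} be a complete set of directions, meaning ⋃_{w ∈ W} ℤw = ℤ^m (every lattice point is an integer multiple of some w ∈ W). For each w ∈ W let ℋ(w) be the closed linear span in L²(J^m) of the functions x ↦ φ(w·x) with φ : ℝ → ℂ continuous and 2-periodic. Then the closed linear span of ⋃_{w ∈ W} ℋ(w) is all of L²(J^m): every F ∈ L²(J^m) is an L²-limit of finite sums of functions of the form x ↦ φ(w·x) with w ∈ W and φ continuous 2-periodic. -/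
open MeasureTheory

/-- The map from `ℝ^m` onto the unit torus, `x ↦ x/2 mod 1`. -/
noncomputable def cubeToTorus (m : ℕ) (x : Fin m → ℝ) : UnitAddTorus (Fin m) :=
  fun i => ((x i / 2 : ℝ) : UnitAddCircle)

lemma cubeToTorus_continuous (m : ℕ) : Continuous (cubeToTorus m) := by
  refine continuous_pi fun i => ?_
  exact (AddCircle.continuous_mk' 1).comp ((continuous_apply i).div_const 2)

/-- A measurable section of `cubeToTorus`. -/
noncomputable def torusSec (m : ℕ) (t : UnitAddTorus (Fin m)) : Fin m → ℝ :=
  fun i => 2 * (UnitAddTorus.measurableEquivPiIoc (fun _ : Fin m => (-1/2 : ℝ)) t).1 i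

lemma torusSec_measurable (m : ℕ) : Measurable (torusSec m) := by
  refine measurable_pi_lambda _ fun i => ?_
  exact ((measurable_pi_apply i).comp (measurable_subtype_coe.comp
    (UnitAddTorus.measurableEquivPiIoc (fun _ : Fin m => (-1/2 : ℝ))).measurable)).const_mul 2

lemma torusSec_cubeToTorus (m : ℕ) (x : Fin m → ℝ) (hx : ∀ i, x i ∈ Set.Ioc (-1 : ℝ) 1) :
    torusSec m (cubeToTorus m x) = x := by
  have hy : ∀ i, x i / 2 ∈ Set.Ioc (-1/2 : ℝ) (-1/2 + 1) := by
    intro i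
    obtain ⟨h1, h2⟩ := hx i
    constructor <;> linarith
  have h : cubeToTorus m x = (UnitAddTorus.measurableEquivPiIoc (fun _ : Fin m => (-1/2 : ℝ))).symm
      ⟨fun i => x i / 2, hy⟩ := by
    rw [UnitAddTorus.coe_symm_measurableEquivPiIoc_apply]
    rfl
  funext i
  rw [torusSec, h, MeasurableEquiv.apply_symm_apply]
  ring

lemma ae_Ioc (m : ℕ) : ∀ᵐ x ∂(cubeMeasure m), ∀ i, x i ∈ Set.Ioc (-1 : ℝ) 1 := by
  have h : (Set.pi Set.univ fun i => Set.Ioc ((-1 : Fin m → ℝ) i) ((1 : Fin m → ℝ) i))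
      =ᵐ[volume] Set.Icc (-1 : Fin m → ℝ) 1 := Measure.univ_pi_Ioc_ae_eq_Icc
  rw [cubeMeasure, ← Measure.restrict_congr_set h]
  filter_upwards [ae_restrict_mem (MeasurableSet.univ_pi fun i => measurableSet_Ioc)] with x hx i
  exact hx i trivial

lemma mFourier_cubeToTorus (m : ℕ) (w : Fin m → ℤ) (k : ℤ) (x : Fin m → ℝ) :
    UnitAddTorus.mFourier (k • w) (cubeToTorus m x) =
      Complex.exp (Real.pi * Complex.I * k * ((∑ i, (w i : ℝ) * x i : ℝ) : ℂ)) := by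
  simp only [UnitAddTorus.mFourier, cubeToTorus, ContinuousMap.coe_mk, fourier_coe_apply]
  rw [← Complex.exp_sum]
  congr 1
  push_cast
  rw [Finset.mul_sum]
  refine Finset.sum_congr rfl fun i _ => ?_
  simp
  ring

instance cubeMeasure_finite (m : ℕ) : IsFiniteMeasure (cubeMeasure m) := by
  unfold cubeMeasure
  exact isFiniteMeasure_restrict.2 (isCompact_Icc.measure_lt_top.ne)

/-- if `W ⊆ ℤ^m \ {0}` is complete (every lattice point of `ℤ^m` is an
integer multiple of some `w ∈ W`), then the closed linear span in `L²(J^m)` of all ridge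
functions `x ↦ φ(w·x)` with `w ∈ W` and `φ : ℝ → ℂ` continuous `2`-periodic is all of
`L²(J^m)`. -/
theorem stmt19 {m : ℕ} (hm : 1 ≤ m) (W : Set (Fin m → ℤ)) (hW : ∀ w ∈ W, w ≠ 0)
    (hcomplete : ∀ v : Fin m → ℤ, ∃ w ∈ W, ∃ k : ℤ, v = k • w) :
    (Submodule.span ℂ
      {F : Lp ℂ 2 (cubeMeasure m) | ∃ w ∈ W, ∃ φ : ℝ → ℂ, Continuous φ ∧
        (∀ s : ℝ, φ (s + 2) = φ s) ∧
        ⇑F =ᵐ[cubeMeasure m] fun x => φ (∑ i, (w i : ℝ) * x i)}).topologicalClosure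
      = ⊤ := by
  set K := (Submodule.span ℂ
      {F : Lp ℂ 2 (cubeMeasure m) | ∃ w ∈ W, ∃ φ : ℝ → ℂ, Continuous φ ∧
        (∀ s : ℝ, φ (s + 2) = φ s) ∧
        ⇑F =ᵐ[cubeMeasure m] fun x => φ (∑ i, (w i : ℝ) * x i)}).topologicalClosure with hK
  have hKc : IsClosed (K : Set (Lp ℂ 2 (cubeMeasure m))) := Submodule.isClosed_topologicalClosure _
  have hmeas : Measurable (cubeToTorus m) := (cubeToTorus_continuous m).measurable
  set ν : Measure (UnitAddTorus (Fin m)) := (cubeMeasure m).map (cubeToTorus m) with hν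
  have hmp : MeasurePreserving (cubeToTorus m) (cubeMeasure m) ν := ⟨hmeas, rfl⟩
  have : IsFiniteMeasure ν := by rw [hν]; infer_instance
  let T : Lp ℂ 2 ν →L[ℂ] Lp ℂ 2 (cubeMeasure m) :=
    (Lp.compMeasurePreservingₗᵢ ℂ (cubeToTorus m) hmp).toContinuousLinearMap
  have hT : ∀ g : Lp ℂ 2 ν, ⇑(T g) =ᵐ[cubeMeasure m] g ∘ cubeToTorus m := fun g =>
    Lp.coeFn_compMeasurePreserving g hmp
  let L : C(UnitAddTorus (Fin m), ℂ) →L[ℂ] Lp ℂ 2 ν := ContinuousMap.toLp 2 ν ℂ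
  have hL : ∀ f, ⇑(T (L f)) =ᵐ[cubeMeasure m] f ∘ cubeToTorus m := fun f =>
    (hT (L f)).trans (hmp.quasiMeasurePreserving.ae_eq_comp (ContinuousMap.coeFn_toLp ν f))
  have h1 : ∀ f, T (L f) ∈ K := by
    have : (⊤ : Submodule ℂ C(UnitAddTorus (Fin m), ℂ)) ≤ K.comap (T ∘L L).toLinearMap := by
      rw [← UnitAddTorus.span_mFourier_closure_eq_top]
      refine Submodule.topologicalClosure_minimal _ ?_ (hKc.preimage (T ∘L L).continuous)
      rw [Submodule.span_le]
      rintro _ ⟨n, rfl⟩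
      obtain ⟨w, hw, k, rfl⟩ := hcomplete n
      refine Submodule.le_topologicalClosure _ (Submodule.subset_span ?_)
      refine ⟨w, hw, fun s => Complex.exp (Real.pi * Complex.I * k * (s : ℂ)), by fun_prop, ?_, ?_⟩
      · intro s
        refine Eq.trans ?_ (Complex.exp_periodic.int_mul k _)
        dsimp only
        congr 1
        push_cast
        ring
      · refine (hL _).trans (Filter.Eventually.of_forall fun x => ?_)
        exact mFourier_cubeToTorus m w k x
    exact fun f => this (Submodule.mem_top (x := f))
  have h2 : ∀ g, T g ∈ K := by
    intro g
    have hd : DenseRange L := ContinuousMap.toLp_denseRange ℂ ν ℂ (by norm_num)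
    exact hd.induction_on (p := fun g => T g ∈ K) g (hKc.preimage T.continuous) h1
  rw [eq_top_iff]
  intro F _
  have hF := Lp.memLp F
  have hG : StronglyMeasurable (F ∘ torusSec m) :=
    (Lp.stronglyMeasurable F).comp_measurable (torusSec_measurable m)
  have hae : (F ∘ torusSec m) ∘ cubeToTorus m =ᵐ[cubeMeasure m] F := by
    filter_upwards [ae_Ioc m] with x hx
    simp [torusSec_cubeToTorus m x hx]
  have hmem : MemLp (F ∘ torusSec m) 2 ν := by
    rw [hν, memLp_map_measure_iff hG.aestronglyMeasurable hmeas.aemeasurable]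
    exact (memLp_congr_ae hae).2 hF
  have : F = T hmem.toLp := by
    apply Lp.ext
    exact hae.symm.trans ((hmp.quasiMeasurePreserving.ae_eq_comp hmem.coeFn_toLp).symm.trans
      (hT _).symm)
  rw [this]
  exact h2 _
end
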